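/- Let q be an even prime power with q > 2, and let K be a k-arc of PG(2, q) with q − √q + 1 < k ≤ q + 1. Then K is contained in a unique (q + 2)-arc of PG(2, q). -/

import Mathlib

open Module

/-- Points of the projective space `PG(n, q)` over the field `F` (with `q = |F|`). -/
abbrev PGPoint (F : Type*) [Field F] (n : ℕ) := Projectivization F (Fin (n + 1) → F)

/-- The set of projective points lying in the projective subspace determined by
a linear subspace `W`. -/
def ptsIn {F : Type*} [Field F] {n : ℕ} (W : Submodule F (Fin (n + 1) → F)) :
    Set (PGPoint F n) := {P | P.submodule ≤ W}

/-- Three points of `PG(n, q)` are collinear if they lie on a common line. -/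
def Coll3 {F : Type*} [Field F] {n : ℕ} (P₁ P₂ P₃ : PGPoint F n) : Prop :=
  Module.finrank F ↥(P₁.submodule ⊔ P₂.submodule ⊔ P₃.submodule) ≤ 2

/-- A cap (a plane arc when `n = 2`): a set of points no three of which are collinear. -/
def IsCap {F : Type*} [Field F] {n : ℕ} (K : Set (PGPoint F n)) : Prop :=
  ∀ P₁ ∈ K, ∀ P₂ ∈ K, ∀ P₃ ∈ K, P₁ ≠ P₂ → P₁ ≠ P₃ → P₂ ≠ P₃ → ¬ Coll3 P₁ P₂ P₃

/-- A complete cap: a cap that is not contained in a cap with one more point. -/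
def IsCompleteCap {F : Type*} [Field F] {n : ℕ} (K : Set (PGPoint F n)) : Prop :=
  IsCap K ∧ ∀ P ∉ K, ¬ IsCap (insert P K)

/-- A tangent line of `K`: a line (2-dimensional linear subspace) meeting `K`
in exactly one point. -/
def IsTangent {F : Type*} [Field F] {n : ℕ} (K : Set (PGPoint F n))
    (W : Submodule F (Fin (n + 1) → F)) : Prop :=
  Module.finrank F W = 2 ∧ (ptsIn W ∩ K).ncard = 1

namespace Seg
open MvPolynomial

section HZ
variable {F : Type*} [Field F]

abbrev RR (F : Type*) [Field F] := MvPolynomial (Fin 3) F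

def HomZ (Y : RR F) (d : ℤ) : Prop := ∀ m, coeff m Y ≠ 0 → ((m.degree : ℕ) : ℤ) = d

lemma HomZ.zero (d : ℤ) : HomZ (0 : RR F) d := by intro m hm; simp at hm

lemma HomZ.add {Y Z : RR F} {d : ℤ} (hY : HomZ Y d) (hZ : HomZ Z d) : HomZ (Y + Z) d := by
  intro m hm
  by_cases h : coeff m Y = 0
  · apply hZ; intro h2; apply hm; simp [h, h2]
  · exact hY m h

lemma HomZ.neg {Y : RR F} {d : ℤ} (hY : HomZ Y d) : HomZ (-Y) d := by
  intro m hm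
  apply hY; simpa using hm

lemma HomZ.sub {Y Z : RR F} {d : ℤ} (hY : HomZ Y d) (hZ : HomZ Z d) : HomZ (Y - Z) d := by
  rw [sub_eq_add_neg]; exact hY.add hZ.neg

lemma HomZ.mul {Y Z : RR F} {d e : ℤ} (hY : HomZ Y d) (hZ : HomZ Z e) : HomZ (Y * Z) (d + e) := by
  intro m hm
  rw [coeff_mul] at hm
  obtain ⟨p, hp, h⟩ := Finset.exists_ne_zero_of_sum_ne_zero hm
  rw [Finset.HasAntidiagonal.mem_antidiagonal] at hp
  have h1 := hY p.1 (left_ne_zero_of_mul h)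
  have h2 := hZ p.2 (right_ne_zero_of_mul h)
  rw [← hp, map_add]; push_cast; omega

lemma HomZ.C (a : F) : HomZ (C a : RR F) 0 := by
  intro m hm
  rw [coeff_C] at hm
  have : 0 = m := by by_contra h; simp [h] at hm
  subst this; simp

lemma HomZ.one : HomZ (1 : RR F) 0 := by simpa using HomZ.C (1 : F)

lemma HomZ.X (i : Fin 3) : HomZ (X i : RR F) 1 := by
  intro m hm
  have := (isHomogeneous_X F i).coeff_eq_zero (d := m)
  by_contra h
  exact hm (this (by exact_mod_cast h))

lemma HomZ.cmul {Y : RR F} {d : ℤ} (a : F) (hY : HomZ Y d) : HomZ (MvPolynomial.C a * Y) d := by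
  have := (HomZ.C a).mul hY
  simpa using this

lemma HomZ.cast {Y : RR F} {d e : ℤ} (hY : HomZ Y d) (h : d = e) : HomZ Y e := h ▸ hY

lemma HomZ.sum {ι : Type*} (s : Finset ι) (Y : ι → RR F) (d : ℤ) (h : ∀ i ∈ s, HomZ (Y i) d) :
    HomZ (∑ i ∈ s, Y i) d := by
  classical
  induction s using Finset.induction_on with
  | empty => simpa using HomZ.zero d
  | insert a s ha ih =>
    rw [Finset.sum_insert ha]
    exact (h a (by simp)).add (ih fun i hi => h i (by simp [hi]))

lemma HomZ.prod_one {ι : Type*} (s : Finset ι) (Y : ι → RR F) (h : ∀ i ∈ s, HomZ (Y i) 1) :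
    HomZ (∏ i ∈ s, Y i) s.card := by
  classical
  induction s using Finset.induction_on with
  | empty => simpa using HomZ.one
  | insert a s ha ih =>
    rw [Finset.prod_insert ha, Finset.card_insert_of_notMem ha]
    refine ((h a (by simp)).mul (ih fun i hi => h i (by simp [hi]))).cast ?_
    push_cast; ring

lemma HomZ.pow {Y : RR F} {d : ℤ} (hY : HomZ Y d) (n : ℕ) : HomZ (Y ^ n) (n * d) := by
  induction n with
  | zero => simpa using HomZ.one
  | succ n ih => rw [pow_succ]; exact (ih.mul hY).cast (by push_cast; ring)

lemma HomZ.eq_zero {Y : RR F} {d : ℤ} (hY : HomZ Y d) (hd : d < 0) : Y = 0 := by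
  ext m
  by_contra h
  have := hY m (by simpa using h)
  omega

lemma HomZ.isHom {Y : RR F} {n : ℕ} (hY : HomZ Y (n : ℤ)) : Y.IsHomogeneous n := by
  intro m hm
  have := hY m hm
  have e := (DFunLike.congr_fun (Finsupp.degree_eq_weight_one (σ := Fin 3) (R := ℕ)) m)
  have h2 : m.degree = n := by exact_mod_cast this
  rw [← h2, e]; rfl

lemma homZ_of_isHom {Y : RR F} {n : ℕ} (hY : Y.IsHomogeneous n) : HomZ Y (n : ℤ) := by
  intro m hm
  by_contra h
  exact hm (hY.coeff_eq_zero (by exact_mod_cast h))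

noncomputable def hc (d : ℤ) : RR F →ₗ[F] RR F :=
  if 0 ≤ d then homogeneousComponent d.toNat else 0

lemma hc_homZ (d : ℤ) (Y : RR F) : HomZ (hc d Y) d := by
  unfold hc
  split_ifs with h
  · have := homZ_of_isHom (homogeneousComponent_isHomogeneous d.toNat Y)
    rwa [Int.toNat_of_nonneg h] at this
  · exact HomZ.zero d

lemma coeff_hc (d : ℤ) (Y : RR F) (m) :
    coeff m (hc d Y) = if ((m.degree : ℕ) : ℤ) = d then coeff m Y else 0 := by
  unfold hc
  by_cases h : 0 ≤ d
  · rw [if_pos h, coeff_homogeneousComponent]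
    have : m.degree = d.toNat ↔ ((m.degree : ℕ) : ℤ) = d := by omega
    simp only [this]
  · rw [if_neg h, if_neg (by omega)]; simp

lemma hc_of {Y : RR F} {e : ℤ} (hY : HomZ Y e) (d : ℤ) : hc d Y = if e = d then Y else 0 := by
  ext m
  rw [coeff_hc]
  by_cases h0 : coeff m Y = 0
  · split_ifs <;> simp [h0]
  · have := hY m h0
    rw [this]; split_ifs <;> simp

lemma hc_self {Y : RR F} {e : ℤ} (hY : HomZ Y e) : hc e Y = Y := by rw [hc_of hY]; simp

lemma hc_mul {L : RR F} {k : ℤ} (hL : HomZ L k) (D : ℤ) (M : RR F) :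
    hc D (L * M) = L * hc (D - k) M := by
  conv_lhs => rw [← sum_homogeneousComponent M]
  conv_rhs => rw [← sum_homogeneousComponent M]
  rw [Finset.mul_sum, map_sum, map_sum, Finset.mul_sum]
  refine Finset.sum_congr rfl fun i _ => ?_
  have h1 := homZ_of_isHom (homogeneousComponent_isHomogeneous i M)
  rw [hc_of (hL.mul h1), hc_of h1]
  by_cases h : k + (i : ℤ) = D
  · rw [if_pos h, if_pos (by omega)]
  · rw [if_neg h, if_neg (by omega), mul_zero]

/-- scaling -/
lemma HomZ.aeval_smul {S : Type*} [CommRing S] [Algebra F S] {Y : RR F} {n : ℕ}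
    (hY : HomZ Y n) (a : S) (z : Fin 3 → S) :
    aeval (fun i => a * z i) Y = a ^ n * aeval z Y := by
  rw [aeval_def, aeval_def, eval₂_eq, eval₂_eq, Finset.mul_sum]
  refine Finset.sum_congr rfl fun m hm => ?_
  have := hY m (by simpa using hm)
  have h2 : ∑ i ∈ m.support, m i = n := by
    have : m.degree = n := by exact_mod_cast this
    rw [← this]; rfl
  simp only [mul_pow]
  rw [Finset.prod_mul_distrib, Finset.prod_pow_eq_pow_sum, h2]
  ring
end HZ
end Seg

namespace Seg
open MvPolynomial

section vec
variable {R : Type*} [CommRing R]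
def dt (a b : Fin 3 → R) : R := a 0 * b 0 + a 1 * b 1 + a 2 * b 2
def cr (a b : Fin 3 → R) : Fin 3 → R :=
  ![a 1 * b 2 - a 2 * b 1, a 2 * b 0 - a 0 * b 2, a 0 * b 1 - a 1 * b 0]

@[simp] lemma cr0 (a b : Fin 3 → R) : cr a b 0 = a 1 * b 2 - a 2 * b 1 := rfl
@[simp] lemma cr1 (a b : Fin 3 → R) : cr a b 1 = a 2 * b 0 - a 0 * b 2 := rfl
@[simp] lemma cr2 (a b : Fin 3 → R) : cr a b 2 = a 0 * b 1 - a 1 * b 0 := rfl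

lemma dt_cr_self (a b : Fin 3 → R) : dt a (cr a b) = 0 := by simp [dt]; ring
lemma dt_cr_self' (a b : Fin 3 → R) : dt b (cr a b) = 0 := by simp [dt]; ring
lemma dt_comm (a b : Fin 3 → R) : dt a b = dt b a := by simp [dt]; ring
lemma dt_cr_rot (a b c : Fin 3 → R) : dt a (cr b c) = dt b (cr c a) := by simp [dt]; ring
lemma cr_anti (a b : Fin 3 → R) : cr a b = - cr b a := by
  funext i; fin_cases i <;> simp <;> ring
lemma dt_neg_right (a b : Fin 3 → R) : dt a (-b) = - dt a b := by simp [dt]; ring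
lemma cr_self (a : Fin 3 → R) : cr a a = 0 := by
  funext i; fin_cases i <;> simp <;> ring
lemma cr_zero_left (a : Fin 3 → R) : cr 0 a = 0 := by
  funext i; fin_cases i <;> simp
lemma cr_zero_right (a : Fin 3 → R) : cr a 0 = 0 := by
  funext i; fin_cases i <;> simp
lemma expand (x l c z : Fin 3 → R) (i : Fin 3) :
    dt (cr x l) c * z i = dt x z * cr l c i + dt l z * cr c x i + dt c z * cr x l i := by
  fin_cases i <;> simp [dt] <;> ring
end vec

section
variable {F : Type*} [Field F]

lemma exists_dt_one {x : Fin 3 → F} (hx : x ≠ 0) : ∃ c, dt x c = 1 := by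
  obtain ⟨i, hi⟩ := Function.ne_iff.mp hx
  refine ⟨Pi.single i (x i)⁻¹, ?_⟩
  simp only [Pi.zero_apply] at hi
  fin_cases i <;> simp_all [dt]

noncomputable def lin (x : Fin 3 → F) : RR F := C (x 0) * X 0 + C (x 1) * X 1 + C (x 2) * X 2

lemma lin_homZ (x : Fin 3 → F) : HomZ (lin x) 1 := by
  unfold lin
  exact ((HomZ.X _).cmul _ |>.add ((HomZ.X _).cmul _)).add ((HomZ.X _).cmul _)

@[simp] lemma eval_lin (x Q : Fin 3 → F) : eval Q (lin x) = dt x Q := by simp [lin, dt]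

lemma aeval_lin {S : Type*} [CommRing S] [Algebra F S] (x : Fin 3 → F) (Q : Fin 3 → S) :
    aeval Q (lin x) = dt (fun i => algebraMap F S (x i)) Q := by simp [lin, dt]

lemma single_step {Y : RR F} {D : ℤ} (hY : HomZ Y D) {x l : Fin 3 → F} (hQ : cr x l ≠ 0)
    (h0 : eval (cr x l) Y = 0) : ∃ G, HomZ G (D - 1) ∧ lin x ∣ Y - G * lin l := by
  rcases lt_or_ge D 0 with hD | hD
  · refine ⟨0, HomZ.zero _, ?_⟩
    simp [hY.eq_zero hD]
  obtain ⟨n, rfl⟩ := Int.eq_ofNat_of_zero_le hD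
  obtain ⟨c, hc1⟩ := exists_dt_one hQ
  set I : Ideal (RR F) := Ideal.span {lin x, lin l} with hI
  have hx : Ideal.Quotient.mk I (lin x) = 0 :=
    Ideal.Quotient.eq_zero_iff_mem.2 (Ideal.subset_span (by simp))
  have hl : Ideal.Quotient.mk I (lin l) = 0 :=
    Ideal.Quotient.eq_zero_iff_mem.2 (Ideal.subset_span (by simp))
  have hXi : ∀ i, Ideal.Quotient.mk I (X i) =
      Ideal.Quotient.mk I (lin c) * algebraMap F _ (cr x l i) := by
    intro i
    have e : (X i : RR F) = lin x * C (cr l c i) + lin l * C (cr c x i) + lin c * C (cr x l i) := by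
      have e1 := expand (R := RR F) (fun i => C (x i)) (fun i => C (l i)) (fun i => C (c i)) X i
      have e2 : dt (cr (fun i => (C (x i) : RR F)) (fun i => C (l i))) (fun i => C (c i)) = 1 := by
        rw [← C_1, ← hc1]; simp [dt]
      rw [e2, one_mul] at e1
      rw [e1]
      have e3 : ∀ a b : Fin 3 → F, cr (fun i => (C (a i) : RR F)) (fun i => C (b i)) i = C (cr a b i) := by
        intro a b; fin_cases i <;> simp
      simp only [e3]
      rfl
    rw [e, map_add, map_add, map_mul, map_mul, map_mul, hx, hl, zero_mul, zero_mul, zero_add,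
      zero_add]
    rfl
  have hmem : Y ∈ I := by
    rw [← Ideal.Quotient.eq_zero_iff_mem]
    have e4 : Ideal.Quotient.mk I Y = aeval (fun i => Ideal.Quotient.mk I (X i)) Y := by
      have : (Ideal.Quotient.mkₐ F I) = aeval (fun i => Ideal.Quotient.mk I (X i)) := by
        apply MvPolynomial.algHom_ext; intro i; simp
      rw [← this]; rfl
    rw [e4]
    simp only [hXi]
    rw [hY.aeval_smul]
    have : aeval (fun i => algebraMap F (RR F ⧸ I) (cr x l i)) Y = algebraMap F _ (eval (cr x l) Y) := by
      exact (MvPolynomial.aeval_algebraMap_apply _ (cr x l) Y)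
    rw [this, h0]; simp
  obtain ⟨a, b, hab⟩ := Ideal.mem_span_pair.1 hmem
  refine ⟨hc ((n:ℤ) - 1) b, hc_homZ _ _, hc ((n : ℤ) - 1) a, ?_⟩
  have e5 : hc (n:ℤ) (a * lin x + b * lin l) = Y := by rw [hab, hc_self hY]
  rw [map_add, mul_comm a, mul_comm b, hc_mul (lin_homZ x), hc_mul (lin_homZ l)] at e5
  rw [← e5]; ring

lemma lemmaD {ι : Type*} (s : Finset ι) (l : ι → Fin 3 → F) (x : Fin 3 → F)
    (h1 : ∀ i ∈ s, cr x (l i) ≠ 0)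
    (h2 : ∀ i ∈ s, ∀ j ∈ s, i ≠ j → dt (l i) (cr x (l j)) ≠ 0)
    {Y : RR F} {D : ℤ} (hY : HomZ Y D) (h0 : ∀ i ∈ s, eval (cr x (l i)) Y = 0) :
    ∃ G, HomZ G (D - s.card) ∧ lin x ∣ Y - G * ∏ i ∈ s, lin (l i) := by
  classical
  induction s using Finset.induction_on with
  | empty => exact ⟨Y, by simpa using hY, by simp⟩
  | insert a s ha ih =>
    obtain ⟨G, hG, M, hM⟩ := ih (fun i hi => h1 i (by simp [hi]))
      (fun i hi j hj => h2 i (by simp [hi]) j (by simp [hj])) (fun i hi => h0 i (by simp [hi]))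
    have hv : eval (cr x (l a)) G = 0 := by
      have := congrArg (eval (cr x (l a))) hM
      rw [map_sub, map_mul, map_mul, eval_lin, dt_cr_self, h0 a (by simp), map_prod] at this
      have hne : ∏ i ∈ s, eval (cr x (l a)) (lin (l i)) ≠ 0 := by
        rw [Finset.prod_ne_zero_iff]
        intro i hi
        rw [eval_lin]
        exact h2 i (by simp [hi]) a (by simp) (by rintro rfl; exact ha hi)
      have h3 : eval (cr x (l a)) G * ∏ i ∈ s, eval (cr x (l a)) (lin (l i)) = 0 := by
        linear_combination -this
      exact (mul_eq_zero.1 h3).resolve_right hne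
    obtain ⟨G', hG', M', hM'⟩ := single_step hG (h1 a (by simp)) hv
    refine ⟨G', hG'.cast ?_, M + M' * ∏ i ∈ s, lin (l i), ?_⟩
    · rw [Finset.card_insert_of_notMem ha]; push_cast; ring
    · rw [Finset.prod_insert ha]
      linear_combination hM + (∏ i ∈ s, lin (l i)) * hM'

structure Arc (A : Finset (Fin 3 → F)) : Prop where
  pair : ∀ x ∈ A, ∀ y ∈ A, x ≠ y → cr x y ≠ 0
  tri : ∀ x ∈ A, ∀ y ∈ A, ∀ z ∈ A, x ≠ y → x ≠ z → y ≠ z → dt x (cr y z) ≠ 0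

lemma Arc.mono {A B : Finset (Fin 3 → F)} (h : Arc B) (hAB : A ⊆ B) : Arc A :=
  ⟨fun x hx y hy => h.pair x (hAB hx) y (hAB hy),
   fun x hx y hy z hz => h.tri x (hAB hx) y (hAB hy) z (hAB hz)⟩

lemma gluing (A : Finset (Fin 3 → F)) (hA : Arc A) (h : (Fin 3 → F) → RR F) (e : ℤ)
    (hh : ∀ x ∈ A, HomZ (h x) e)
    (hc : ∀ x ∈ A, ∀ y ∈ A, x ≠ y → eval (cr x y) (h x) = eval (cr x y) (h y)) :
    ∃ H, HomZ H e ∧ ∀ x ∈ A, lin x ∣ H - h x := by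
  classical
  induction A using Finset.induction_on with
  | empty => exact ⟨0, HomZ.zero _, by simp⟩
  | insert x s hx ih =>
    obtain ⟨H, hH, hd⟩ := ih (hA.mono (Finset.subset_insert _ _)) (fun y hy => hh y (by simp [hy]))
      (fun y hy z hz => hc y (by simp [hy]) z (by simp [hz]))
    have hxs : ∀ y ∈ s, x ≠ y := by rintro y hy rfl; exact hx hy
    obtain ⟨G, hG, hGd⟩ := lemmaD s id x (fun y hy => hA.pair x (by simp) y (by simp [hy]) (hxs y hy))
      (fun y hy z hz hyz => hA.tri y (by simp [hy]) x (by simp) z (by simp [hz]) (hxs y hy).symm hyz (hxs z hz))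
      (Y := H - h x) (hH.sub (hh x (by simp))) (by
        intro y hy
        obtain ⟨M, hM⟩ := hd y hy
        have := congrArg (eval (cr x y)) hM
        rw [map_sub, map_mul, eval_lin, dt_cr_self', zero_mul] at this
        rw [id, map_sub, hc x (by simp) y (by simp [hy]) (hxs y hy)]
        exact this)
    refine ⟨H - G * ∏ y ∈ s, lin y, hH.sub ((hG.mul (HomZ.prod_one s _ fun y _ => lin_homZ y)).cast (by ring)), ?_⟩
    intro y hy
    rcases Finset.mem_insert.1 hy with rfl | hy
    · have : H - G * ∏ y ∈ s, lin y - h y = H - h y - G * ∏ y ∈ s, lin y := by ring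
      rw [this]; exact hGd
    · have : H - G * ∏ y ∈ s, lin y - h y = (H - h y) - G * ∏ y ∈ s, lin y := by ring
      rw [this]
      exact dvd_sub (hd y hy) ((Finset.dvd_prod_of_mem _ hy).mul_left _)

lemma lin_ne_zero {x : Fin 3 → F} (hx : x ≠ 0) : lin x ≠ 0 := by
  obtain ⟨c, hc⟩ := exists_dt_one hx
  intro h
  have := congrArg (eval c) h
  rw [eval_lin, hc] at this
  simp at this

lemma lin_prime {x : Fin 3 → F} (hx : x ≠ 0) : Prime (lin x) := by
  have h0 := lin_ne_zero hx
  apply Irreducible.prime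
  apply MvPolynomial.irreducible_of_totalDegree_eq_one
  · exact ((lin_homZ x).isHom (n := 1)).totalDegree h0
  · intro r hr
    obtain ⟨m, hm⟩ := MvPolynomial.ne_zero_iff.1 h0
    rw [isUnit_iff_ne_zero]
    rintro rfl
    exact hm (zero_dvd_iff.1 (hr m))

lemma lin_not_dvd {x y : Fin 3 → F} (h : cr x y ≠ 0) : ¬ lin x ∣ lin y := by
  obtain ⟨c, hc⟩ := exists_dt_one h
  rintro ⟨M, hM⟩
  have := congrArg (eval (cr x c)) hM
  rw [map_mul, eval_lin, eval_lin, dt_cr_self, zero_mul] at this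
  have e : dt (cr x y) c = - dt y (cr x c) := by simp [dt]; ring
  rw [hc, this] at e; simp at e

lemma prod_lin_dvd (A : Finset (Fin 3 → F)) (hA : Arc A) (hA0 : ∀ x ∈ A, x ≠ 0) (Y : RR F)
    (h : ∀ x ∈ A, lin x ∣ Y) : ∏ x ∈ A, lin x ∣ Y := by
  classical
  induction A using Finset.induction_on generalizing Y with
  | empty => simp
  | insert a s ha ih =>
    obtain ⟨M, rfl⟩ := h a (by simp)
    rw [Finset.prod_insert ha]
    refine mul_dvd_mul_left _ (ih (hA.mono (Finset.subset_insert _ _)) (fun x hx => hA0 x (by simp [hx])) M ?_)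
    intro x hx
    refine ((lin_prime (hA0 x (by simp [hx]))).dvd_or_dvd (h x (by simp [hx]))).resolve_left ?_
    exact lin_not_dvd (hA.pair x (by simp [hx]) a (by simp) (by rintro rfl; exact ha hx))
end
end Seg

namespace Seg
open MvPolynomial

section vec
variable {R : Type*} [CommRing R]
lemma cr_cr (a b c : Fin 3 → R) : cr (cr a b) c = dt a c • b - dt b c • a := by
  funext i; fin_cases i <;> simp [dt] <;> ring
lemma cr_cr' (a b c : Fin 3 → R) : cr a (cr b c) = dt a c • b - dt a b • c := by
  funext i; fin_cases i <;> simp [dt] <;> ring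
lemma dt_cr_cr (a b c d : Fin 3 → R) : dt (cr a b) (cr c d) = dt a c * dt b d - dt a d * dt b c := by
  simp [dt]; ring
lemma cr_cr_cr (x p r : Fin 3 → R) : cr (cr x p) (cr x r) = dt (cr x p) r • x := by
  funext i; fin_cases i <;> simp [dt] <;> ring
lemma dt_cr_comm (a b c : Fin 3 → R) : dt (cr a b) c = dt a (cr b c) := by simp [dt]; ring
end vec

section
variable {F : Type*} [Field F]

lemma nondeg {x y z w : Fin 3 → F} (h : dt x (cr y z) ≠ 0) (h1 : dt w x = 0) (h2 : dt w y = 0)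
    (h3 : dt w z = 0) : w = 0 := by
  funext i
  have := expand x y z w i
  rw [dt_comm x, dt_comm y, dt_comm z, h1, h2, h3, dt_cr_comm] at this
  simpa [h] using this

structure IsTan [Fintype F] (A : Finset (Fin 3 → F)) (x : Fin 3 → F) (T : Finset (Fin 3 → F)) : Prop where
  self : ∀ m ∈ T, dt m x = 0
  ne : ∀ m ∈ T, ∀ y ∈ A, y ≠ x → dt m y ≠ 0
  pw : ∀ m ∈ T, ∀ m' ∈ T, m ≠ m' → cr m m' ≠ 0
  card : T.card + A.card = Fintype.card F + 2

lemma exists_tan [Fintype F] {A : Finset (Fin 3 → F)} (hA : Arc A) (h3 : 3 ≤ A.card)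
    {x : Fin 3 → F} (hx : x ∈ A) : ∃ T, IsTan A x T := by
  classical
  have : 1 < (A.erase x).card := by rw [Finset.card_erase_of_mem hx]; omega
  obtain ⟨y, hy, z, hz, hyz⟩ := Finset.one_lt_card.1 this
  obtain ⟨hyx, hyA⟩ := Finset.mem_erase.1 hy
  obtain ⟨hzx, hzA⟩ := Finset.mem_erase.1 hz
  have hδ := hA.tri x hx y hyA z hzA hyx.symm hzx.symm hyz
  set δ := dt x (cr y z) with hδd
  set m : F → Fin 3 → F := fun a => δ⁻¹ • (cr z x + a • cr x y) with hm
  have dtm : ∀ a p, dt (m a) p = δ⁻¹ * (dt (cr z x) p + a * dt (cr x y) p) := by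
    intro a p; simp [hm, dt]; ring
  have mx : ∀ a, dt (m a) x = 0 := by
    intro a; rw [dtm, dt_comm (cr z x), dt_comm (cr x y), dt_cr_self', dt_cr_self]; simp
  have my : ∀ a, dt (m a) y = 1 := by
    intro a; rw [dtm, dt_comm (cr x y), dt_cr_self', mul_zero, add_zero]
    have : dt (cr z x) y = δ := by rw [hδd]; simp [dt]; ring
    rw [this, inv_mul_cancel₀ hδ]
  have mz : ∀ a, dt (m a) z = a := by
    intro a; rw [dtm, dt_comm (cr z x), dt_cr_self, zero_add]
    have : dt (cr x y) z = δ := by rw [hδd]; simp [dt]; ring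
    rw [this, mul_comm a, ← mul_assoc, inv_mul_cancel₀ hδ, one_mul]
  have minj : Function.Injective m := by
    intro a b h; rw [← mz a, h, mz]
  set lam : (Fin 3 → F) → F := fun p => - dt (cr z x) p / dt (cr x y) p with hlam
  set B := (A.erase x).erase y with hB
  have hBm : ∀ p ∈ B, p ∈ A ∧ p ≠ x ∧ p ≠ y := by
    intro p hp; rw [hB] at hp; simp only [Finset.mem_erase] at hp; tauto
  have hne : ∀ p ∈ B, dt (cr x y) p ≠ 0 := by
    intro p hp
    obtain ⟨h1, h2, h3⟩ := hBm p hp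
    rw [dt_cr_comm]
    exact hA.tri x hx y hyA p h1 hyx.symm h2.symm h3.symm
  have hzero : ∀ p ∈ B, ∀ a, dt (m a) p = 0 ↔ a = lam p := by
    intro p hp a
    rw [dtm, mul_eq_zero, hlam]
    simp only [inv_eq_zero, hδ, false_or]
    rw [eq_div_iff (hne p hp)]
    constructor
    · intro h; linear_combination h
    · intro h; linear_combination h
  have mne : ∀ a, m a ≠ 0 := by
    intro a h
    have := my a
    rw [h] at this; simp [dt] at this
  have laminj : Set.InjOn lam B := by
    intro p hp r hr h
    by_contra hpr
    obtain ⟨h1, h2, h3⟩ := hBm p hp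
    obtain ⟨h4, h5, h6⟩ := hBm r hr
    exact mne (lam p) (nondeg (hA.tri x hx p h1 r h4 h2.symm h5.symm hpr) (mx _)
      ((hzero p hp _).2 rfl) ((hzero r hr _).2 h))
  refine ⟨(Finset.univ \ B.image lam).image m, ?_, ?_, ?_, ?_⟩
  · intro w hw
    obtain ⟨a, -, rfl⟩ := Finset.mem_image.1 hw
    exact mx a
  · intro w hw p hp hpx
    obtain ⟨a, ha, rfl⟩ := Finset.mem_image.1 hw
    by_cases hpy : p = y
    · rw [hpy, my]; exact one_ne_zero
    have hpB : p ∈ B := by rw [hB]; simp [hpy, hpx, hp]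
    rw [Ne, hzero p hpB]
    rintro rfl
    simp only [Finset.mem_sdiff] at ha
    exact ha.2 (Finset.mem_image_of_mem _ hpB)
  · intro w hw w' hw' hww h
    obtain ⟨a, ha, rfl⟩ := Finset.mem_image.1 hw
    obtain ⟨b, hb, rfl⟩ := Finset.mem_image.1 hw'
    have := cr_cr (m a) (m b) y
    rw [h, cr_zero_left, my, my, one_smul, one_smul] at this
    exact hww (sub_eq_zero.1 this.symm).symm
  · rw [Finset.card_image_of_injective _ minj]
    have e1 := Finset.card_sdiff_add_card_eq_card (Finset.subset_univ (B.image lam))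
    rw [Finset.card_image_of_injOn laminj, Finset.card_univ] at e1
    have e2 : B.card = A.card - 2 := by
      rw [hB, Finset.card_erase_of_mem hy, Finset.card_erase_of_mem hx]; omega
    omega

lemma lemmaP [Fintype F] (N : Finset (Fin 3 → F)) {x y z : Fin 3 → F} (hd : dt x (cr y z) ≠ 0)
    (hx : ∀ m ∈ N, dt m x = 0) (hy : ∀ m ∈ N, dt m y ≠ 0) (hz : ∀ m ∈ N, dt m z ≠ 0)
    (hp : ∀ m ∈ N, ∀ m' ∈ N, m ≠ m' → cr m m' ≠ 0) (hc : N.card + 1 = Fintype.card F) :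
    ∏ m ∈ N, dt m y = - ∏ m ∈ N, dt m z := by
  classical
  have inj : Set.InjOn (fun m => dt m y / dt m z) N := by
    intro m hm m' hm' h
    by_contra hne
    apply hp m hm m' hm' hne
    simp only at h
    rw [div_eq_div_iff (hz m hm) (hz m' hm')] at h
    have hw : dt m' z • m - dt m z • m' = 0 := by
      apply nondeg hd
      · have e : dt (dt m' z • m - dt m z • m') x = dt m' z * dt m x - dt m z * dt m' x := by
          simp [dt]; ring
        rw [e, hx m hm, hx m' hm']; ring
      · have e : dt (dt m' z • m - dt m z • m') y = dt m' z * dt m y - dt m z * dt m' y := by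
          simp [dt]; ring
        rw [e]; linear_combination h
      · have e : dt (dt m' z • m - dt m z • m') z = dt m' z * dt m z - dt m z * dt m' z := by
          simp [dt]; ring
        rw [e]; ring
    have e2 : dt m' z • cr m m' = cr (dt m' z • m - dt m z • m') m' := by
      funext i; fin_cases i <;> simp <;> ring
    rw [hw, cr_zero_left] at e2
    exact (smul_eq_zero.1 e2).resolve_left (hz m' hm')
  have him : N.image (fun m => dt m y / dt m z) = Finset.univ.erase 0 := by
    apply Finset.eq_of_subset_of_card_le
    · intro a ha
      obtain ⟨m, hm, rfl⟩ := Finset.mem_image.1 ha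
      simp [hy m hm, hz m hm]
    · rw [Finset.card_image_of_injOn inj, Finset.card_erase_of_mem (Finset.mem_univ _), Finset.card_univ]
      omega
  have hprod : ∏ a ∈ (Finset.univ : Finset F).erase 0, a = -1 := by
    have h1 := FiniteField.prod_univ_units_id_eq_neg_one (K := F)
    have h2 := congrArg (Units.val) h1
    rw [Units.coe_prod, Units.val_neg, Units.val_one] at h2
    rw [← h2]
    symm
    refine Finset.prod_bij (fun (u : Fˣ) _ => (u : F)) ?_ ?_ ?_ ?_
    · intro u _; simp
    · intro u _ v _ h; exact Units.ext h
    · intro b hb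
      have : b ≠ 0 := by simpa using hb
      exact ⟨Units.mk0 b this, by simp, rfl⟩
    · intro u _; rfl
  rw [← him, Finset.prod_image inj, Finset.prod_div_distrib] at hprod
  rw [div_eq_iff (by rw [Finset.prod_ne_zero_iff]; exact hz)] at hprod
  rw [hprod]; ring

variable [CharP F 2]
lemma neg2 (a : F) : -a = a := CharTwo.neg_eq a

lemma dt_cr_swap (a b c : Fin 3 → F) : dt (cr a b) c = dt (cr c b) a := by
  rw [← neg2 (dt (cr c b) a)]; simp [dt]; ring

lemma tangents [Fintype F] {A : Finset (Fin 3 → F)} (hA : Arc A)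
    {T : (Fin 3 → F) → Finset (Fin 3 → F)} (hT : ∀ x ∈ A, IsTan A x (T x)) {x y z : Fin 3 → F}
    (hx : x ∈ A) (hy : y ∈ A) (hz : z ∈ A) (hxy : x ≠ y) (hxz : x ≠ z) (hyz : y ≠ z) :
    (∏ m ∈ T x, dt m y) * (∏ m ∈ T y, dt m z) * (∏ m ∈ T z, dt m x) =
    (∏ m ∈ T x, dt m z) * (∏ m ∈ T y, dt m x) * (∏ m ∈ T z, dt m y) := by
  classical
  have key : ∀ x ∈ A, ∀ y ∈ A, ∀ z ∈ A, x ≠ y → x ≠ z → y ≠ z → ∀ B : Finset (Fin 3 → F),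
      (∀ p, p ∈ B ↔ p ∈ A ∧ p ≠ x ∧ p ≠ y ∧ p ≠ z) →
      ((∏ m ∈ T x, dt m y) * (∏ p ∈ B, dt (cr x p) y) =
      (∏ m ∈ T x, dt m z) * (∏ p ∈ B, dt (cr x p) z)) ∧ (∏ p ∈ B, dt (cr x p) y) ≠ 0 := by
    intro x hx y hy z hz hxy hxz hyz B hB
    have hx0 : x ≠ 0 := by rintro rfl; exact hA.pair _ hx y hy hxy (cr_zero_left _)
    have h1 := hT x hx
    have hcc : ∀ p ∈ B, ∀ r ∈ B, p ≠ r → cr (cr x p) (cr x r) ≠ 0 := by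
      intro p hp r hr hpr
      rw [cr_cr_cr, dt_cr_comm]
      have hp' := (hB p).1 hp
      have hr' := (hB r).1 hr
      exact smul_ne_zero (hA.tri x hx p hp'.1 r hr'.1 hp'.2.1.symm hr'.2.1.symm hpr) hx0
    have hmc : ∀ m ∈ T x, ∀ p ∈ B, cr m (cr x p) ≠ 0 := by
      intro m hm p hp
      have hp' := (hB p).1 hp
      rw [cr_cr', h1.self m hm, zero_smul, sub_zero]
      exact smul_ne_zero (h1.ne m hm p hp'.1 hp'.2.1) hx0
    have inj : Set.InjOn (fun p => cr x p) B := by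
      intro p hp r hr h
      by_contra hpr
      apply hcc p hp r hr hpr
      simp only at h
      rw [h, cr_self]
    have disj : Disjoint (T x) (B.image fun p => cr x p) := by
      rw [Finset.disjoint_left]
      intro m hm hm2
      obtain ⟨p, hp, rfl⟩ := Finset.mem_image.1 hm2
      exact hmc _ hm p hp (cr_self _)
    have hne : ∀ p ∈ B, ∀ w ∈ A, x ≠ w → p ≠ w → dt (cr x p) w ≠ 0 := by
      intro p hp w hw hxw hpw
      have hp' := (hB p).1 hp
      rw [dt_cr_comm]
      exact hA.tri x hx p hp'.1 w hw hp'.2.1.symm hxw hpw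
    have hBc : B.card + 3 = A.card := by
      have : B = ((A.erase x).erase y).erase z := by
        ext p; rw [hB]; simp only [Finset.mem_erase]; tauto
      have m1 : y ∈ A.erase x := by simp [hy, hxy.symm]
      have m2 : z ∈ (A.erase x).erase y := by simp [hz, hxz.symm, hyz.symm]
      have c1 := Finset.card_erase_add_one hx
      have c2 := Finset.card_erase_add_one m1
      have c3 := Finset.card_erase_add_one m2
      rw [this]; omega
    have := lemmaP (T x ∪ B.image fun p => cr x p) (hA.tri x hx y hy z hz hxy hxz hyz)
      (by
        intro m hm
        rcases Finset.mem_union.1 hm with hm | hm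
        · exact h1.self m hm
        · obtain ⟨p, hp, rfl⟩ := Finset.mem_image.1 hm
          rw [dt_comm, dt_cr_self])
      (by
        intro m hm
        rcases Finset.mem_union.1 hm with hm | hm
        · exact h1.ne m hm y hy hxy.symm
        · obtain ⟨p, hp, rfl⟩ := Finset.mem_image.1 hm
          exact hne p hp y hy hxy ((hB p).1 hp).2.2.1)
      (by
        intro m hm
        rcases Finset.mem_union.1 hm with hm | hm
        · exact h1.ne m hm z hz hxz.symm
        · obtain ⟨p, hp, rfl⟩ := Finset.mem_image.1 hm
          exact hne p hp z hz hxz ((hB p).1 hp).2.2.2)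
      (by
        intro m hm m' hm' hmm
        rcases Finset.mem_union.1 hm with hm | hm
        · rcases Finset.mem_union.1 hm' with hm' | hm'
          · exact h1.pw m hm m' hm' hmm
          · obtain ⟨p, hp, rfl⟩ := Finset.mem_image.1 hm'
            exact hmc m hm p hp
        · obtain ⟨p, hp, rfl⟩ := Finset.mem_image.1 hm
          rcases Finset.mem_union.1 hm' with hm' | hm'
          · rw [cr_anti, neg_ne_zero]
            exact hmc m' hm' p hp
          · obtain ⟨r, hr, rfl⟩ := Finset.mem_image.1 hm'
            exact hcc p hp r hr (by rintro rfl; exact hmm rfl))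
      (by
        rw [Finset.card_union_of_disjoint disj, Finset.card_image_of_injOn inj]
        have := h1.card
        omega)
    rw [Finset.prod_union disj, Finset.prod_union disj, Finset.prod_image inj, Finset.prod_image inj, neg2] at this
    refine ⟨this, ?_⟩
    rw [Finset.prod_ne_zero_iff]
    exact fun p hp => hne p hp y hy hxy ((hB p).1 hp).2.2.1
  set B := ((A.erase x).erase y).erase z with hBd
  have hB : ∀ p, p ∈ B ↔ p ∈ A ∧ p ≠ x ∧ p ≠ y ∧ p ≠ z := by
    intro p; rw [hBd]; simp only [Finset.mem_erase]; tauto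
  have sw : ∀ x y, ∏ p ∈ B, dt (cr x p) y = ∏ p ∈ B, dt (cr y p) x :=
    fun x y => Finset.prod_congr rfl fun p _ => dt_cr_swap x p y
  obtain ⟨k1, n1⟩ := key x hx y hy z hz hxy hxz hyz B hB
  obtain ⟨k2, n2⟩ := key y hy z hz x hx hyz hxy.symm hxz.symm B (by intro p; rw [hB]; tauto)
  obtain ⟨k3, n3⟩ := key z hz x hx y hy hxz.symm hyz.symm hxy B (by intro p; rw [hB]; tauto)
  rw [sw y x] at k2
  rw [sw z y] at k3
  rw [sw z x] at k3 n3
  generalize (∏ p ∈ B, dt (cr x p) y) = e1 at *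
  generalize (∏ p ∈ B, dt (cr y p) z) = e2 at *
  generalize (∏ p ∈ B, dt (cr x p) z) = e3 at *
  have : e1 * e2 * e3 ≠ 0 := mul_ne_zero (mul_ne_zero n1 n2) n3
  apply mul_right_cancel₀ this
  generalize (∏ m ∈ T x, dt m y) = a at *
  generalize (∏ m ∈ T x, dt m z) = b at *
  generalize (∏ m ∈ T y, dt m x) = c at *
  generalize (∏ m ∈ T y, dt m z) = d at *
  generalize (∏ m ∈ T z, dt m x) = f at *
  generalize (∏ m ∈ T z, dt m y) = g at *
  calc a * d * f * (e1 * e2 * e3) = (a * e1) * (d * e2) * (f * e3) := by ring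
    _ = (b * e3) * (c * e1) * (g * e2) := by rw [k1, k2, k3]
    _ = _ := by ring

structure Setup [Fintype F] (A : Finset (Fin 3 → F)) (T : (Fin 3 → F) → Finset (Fin 3 → F))
    (c : (Fin 3 → F) → (Fin 3 → F)) (κ : (Fin 3 → F) → F) (t : ℕ) (Φ : RR F) : Prop where
  arc : Arc A
  ne0 : ∀ x ∈ A, x ≠ 0
  tan : ∀ x ∈ A, IsTan A x (T x)
  hc : ∀ x ∈ A, dt (c x) x = 1
  hκ : ∀ x ∈ A, κ x ≠ 0
  ht : t + A.card = Fintype.card F + 2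
  hom : HomZ Φ t
  dvd : ∀ x ∈ A, lin x ∣ Φ - C (κ x) * ∏ m ∈ T x, lin (cr (c x) m)
  val : ∀ x ∈ A, ∀ y ∈ A, x ≠ y → eval (cr x y) Φ ≠ 0

lemma exists_setup [Fintype F] {A : Finset (Fin 3 → F)} (hA : Arc A) (h3 : 3 ≤ A.card) :
    ∃ T c κ t Φ, Setup A T c κ t Φ := by
  classical
  have hT' : ∀ x, ∃ T, x ∈ A → IsTan A x T := by
    intro x
    by_cases hx : x ∈ A
    · obtain ⟨T, hT⟩ := exists_tan hA h3 hx; exact ⟨T, fun _ => hT⟩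
    · exact ⟨∅, fun h => absurd h hx⟩
  choose T hT using hT'
  have hA0 : ∀ x ∈ A, x ≠ 0 := by
    rintro x hx rfl
    obtain ⟨y, hy, hyx⟩ := Finset.exists_mem_ne (by omega : 1 < A.card) 0
    exact hA.pair _ hx y hy hyx.symm (cr_zero_left _)
  have hc' : ∀ x, ∃ c, x ∈ A → dt c x = 1 := by
    intro x
    by_cases hx : x ∈ A
    · obtain ⟨c, hc⟩ := exists_dt_one (hA0 x hx); exact ⟨c, fun _ => by rw [dt_comm, hc]⟩
    · exact ⟨0, fun h => absurd h hx⟩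
  choose c hc using hc'
  obtain ⟨x0, hx0⟩ : A.Nonempty := Finset.card_pos.1 (by omega)
  set P : (Fin 3 → F) → (Fin 3 → F) → F := fun x y => ∏ m ∈ T x, dt m y with hP
  have hPne : ∀ x ∈ A, ∀ y ∈ A, x ≠ y → P x y ≠ 0 := by
    intro x hx y hy hxy
    rw [hP]; simp only
    rw [Finset.prod_ne_zero_iff]
    exact fun m hm => (hT x hx).ne m hm y hy hxy.symm
  set κ : (Fin 3 → F) → F := fun x => if x = x0 then 1 else P x0 x / P x x0 with hκ
  have hκ0 : ∀ x ∈ A, κ x ≠ 0 := by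
    intro x hx
    rw [hκ]; simp only
    split_ifs with h
    · exact one_ne_zero
    · exact div_ne_zero (hPne _ hx0 _ hx (Ne.symm h)) (hPne _ hx _ hx0 h)
  have hκP : ∀ x ∈ A, ∀ y ∈ A, x ≠ y → κ x * P x y = κ y * P y x := by
    intro x hx y hy hxy
    by_cases h1 : x = x0
    · subst h1
      have : y ≠ x := hxy.symm
      simp only [hκ, if_pos, if_neg this]
      rw [div_mul_cancel₀ _ (hPne _ hy _ hx this), one_mul]
    · by_cases h2 : y = x0
      · subst h2
        simp only [hκ, if_pos, if_neg hxy]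
        rw [div_mul_cancel₀ _ (hPne _ hx _ hy hxy), one_mul]
      · simp only [hκ, if_neg h1, if_neg h2]
        have := tangents hA hT hx0 hx hy (Ne.symm h1) (Ne.symm h2) hxy
        have n1 := hPne _ hx _ hx0 h1
        have n2 := hPne _ hy _ hx0 h2
        rw [div_mul_eq_mul_div, div_mul_eq_mul_div, div_eq_div_iff n1 n2]
        simp only [hP]
        linear_combination this
  set g : (Fin 3 → F) → RR F := fun x => C (κ x) * ∏ m ∈ T x, lin (cr (c x) m) with hg
  have hgx : ∀ x ∈ A, ∀ y, eval (cr x y) (g x) = κ x * P x y := by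
    intro x hx y
    simp only [hg, hP, map_mul, map_prod, eval_C, eval_lin]
    congr 1
    refine Finset.prod_congr rfl fun m hm => ?_
    rw [dt_cr_cr, hc x hx, (hT x hx).self m hm]; ring
  have hgy : ∀ y ∈ A, ∀ x, eval (cr x y) (g y) = κ y * P y x := by
    intro x hx y
    simp only [hg, hP, map_mul, map_prod, eval_C, eval_lin]
    congr 1
    refine Finset.prod_congr rfl fun m hm => ?_
    rw [dt_cr_cr, hc x hx, (hT x hx).self m hm]
    conv_rhs => rw [← neg2 (dt m y)]
    ring
  have ex : ∃ t, t + A.card = Fintype.card F + 2 := ⟨_, (hT x0 hx0).card⟩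
  obtain ⟨t, ht⟩ := ex
  have hTc : ∀ x ∈ A, (T x).card = t := by
    intro x hx; have := (hT x hx).card; omega
  obtain ⟨Φ, hΦ, hd⟩ := gluing A hA g t
    (by
      intro x hx
      rw [← hTc x hx]
      exact (HomZ.prod_one _ _ fun m _ => lin_homZ _).cmul _)
    (by
      intro x hx y hy hxy
      rw [hgx x hx, hgy y hy, hκP x hx y hy hxy])
  refine ⟨T, c, κ, t, Φ, hA, hA0, hT, hc, hκ0, ht, hΦ, hd, ?_⟩
  intro x hx y hy hxy
  obtain ⟨M, hM⟩ := hd x hx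
  have := congrArg (eval (cr x y)) hM
  rw [map_sub, hgx x hx, map_mul, eval_lin, dt_cr_self, zero_mul, sub_eq_zero] at this
  rw [this]
  exact mul_ne_zero (hκ0 x hx) (hPne x hx y hy hxy)
end
end Seg

namespace Seg
set_option linter.unusedSectionVars false
set_option linter.unusedSimpArgs false
open MvPolynomial

open Polynomial in
/-- Newton method (no monic assumption). -/
lemma newton {R : Type*} [CommRing R] (I : Ideal R) [IsAdicComplete I R] (f : R[X]) (a₀ : R)
    (h₁ : f.eval a₀ ∈ I) (h₂ : IsUnit (Ideal.Quotient.mk I ((derivative f).eval a₀))) :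
    ∃ a, f.IsRoot a ∧ a - a₀ ∈ I := by
    classical
      let f' := derivative f
      let c : ℕ → R := fun n => Nat.recOn n a₀ fun _ b => b - f.eval b * Ring.inverse (f'.eval b)
      have hc : ∀ n, c (n + 1) = c n - f.eval (c n) * Ring.inverse (f'.eval (c n)) := by
        intro n
        simp only [c]
      have hc_mod : ∀ n, c n ≡ a₀ [SMOD I] := by
        intro n
        induction n with
        | zero => rfl
        | succ n ih => ?_
        rw [hc, sub_eq_add_neg, ← add_zero a₀]
        refine ih.add ?_
        rw [SModEq.zero, Ideal.neg_mem_iff]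
        refine I.mul_mem_right _ ?_
        rw [← SModEq.zero] at h₁ ⊢
        exact (ih.eval f).trans h₁
      have hf'c : ∀ n, IsUnit (f'.eval (c n)) := by
        intro n
        have := isLocalHom_of_le_jacobson_bot I (IsAdicComplete.le_jacobson_bot I)
        apply IsUnit.of_map (Ideal.Quotient.mk I)
        convert! h₂ using 1
        exact SModEq.def.mp ((hc_mod n).eval _)
      have hfcI : ∀ n, f.eval (c n) ∈ I ^ (n + 1) := by
        intro n
        induction n with
        | zero => simpa only [Nat.rec_zero, zero_add, pow_one] using! h₁
        | succ n ih => ?_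
        rw [← taylor_eval_sub (c n), hc, sub_eq_add_neg, sub_eq_add_neg,
          add_neg_cancel_comm]
        rw [eval_eq_sum, sum_over_range' _ _ _ (lt_add_of_pos_right _ zero_lt_two), ←
          Finset.sum_range_add_sum_Ico _ (Nat.le_add_left _ _)]
        swap
        · intro i
          rw [zero_mul]
        refine Ideal.add_mem _ ?_ ?_
        · rw [← one_add_one_eq_two, Finset.sum_range_succ, Finset.range_one, Finset.sum_singleton,
            taylor_coeff_zero, taylor_coeff_one, pow_zero, pow_one, mul_one, mul_neg,
            mul_left_comm, Ring.mul_inverse_cancel _ (hf'c n), mul_one, add_neg_cancel]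
          exact Ideal.zero_mem _
        · refine Submodule.sum_mem _ ?_
          simp only [Finset.mem_Ico]
          rintro i ⟨h2i, _⟩
          have aux : n + 2 ≤ i * (n + 1) := by trans 2 * (n + 1) <;> nlinarith only [h2i]
          refine Ideal.mul_mem_left _ _ (Ideal.pow_le_pow_right aux ?_)
          rw [pow_mul']
          exact Ideal.pow_mem_pow ((Ideal.neg_mem_iff _).2 <| Ideal.mul_mem_right _ _ ih) _
      have aux : ∀ m n, m ≤ n → c m ≡ c n [SMOD (I ^ m • ⊤ : Ideal R)] := by
        intro m n hmn
        rw [← Ideal.one_eq_top, Ideal.smul_eq_mul, mul_one]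
        obtain ⟨k, rfl⟩ := Nat.exists_eq_add_of_le hmn
        clear hmn
        induction k with
        | zero => rw [add_zero]
        | succ k ih => ?_
        rw [← add_assoc, hc, ← add_zero (c m), sub_eq_add_neg]
        refine ih.add ?_
        symm
        rw [SModEq.zero, Ideal.neg_mem_iff]
        refine Ideal.mul_mem_right _ _ (Ideal.pow_le_pow_right ?_ (hfcI _))
        rw [add_assoc]
        exact le_self_add
      obtain ⟨a, ha⟩ := IsPrecomplete.prec' c (aux _ _)
      refine ⟨a, ?_, ?_⟩
      · show f.IsRoot a
        suffices ∀ n, f.eval a ≡ 0 [SMOD (I ^ n • ⊤ : Ideal R)] by exact IsHausdorff.haus' _ this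
        intro n
        specialize ha n
        rw [← Ideal.one_eq_top, Ideal.smul_eq_mul, mul_one] at ha ⊢
        refine (ha.symm.eval f).trans ?_
        rw [SModEq.zero]
        exact Ideal.pow_le_pow_right le_self_add (hfcI _)
      · show a - a₀ ∈ I
        specialize ha (0 + 1)
        rw [hc, pow_one, ← Ideal.one_eq_top, Ideal.smul_eq_mul, mul_one, sub_eq_add_neg] at ha
        rw [← SModEq.sub_mem, ← add_zero a₀]
        refine ha.symm.trans (SModEq.rfl.add ?_)
        rw [SModEq.zero, Ideal.neg_mem_iff]
        exact Ideal.mul_mem_right _ _ h₁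

section
variable {F : Type*} [Field F]

lemma det_c {c x m m' : Fin 3 → F} (hc : dt c x = 1) (h1 : dt m x = 0) (h2 : dt m' x = 0)
    (h : cr m m' ≠ 0) : dt c (cr m m') ≠ 0 := by
  intro h0
  apply h
  have e1 : cr x (cr m m') = 0 := by
    rw [cr_cr', dt_comm x, dt_comm x, h1, h2]; simp
  have e2 := cr_cr' c x (cr m m')
  rw [e1, cr_zero_right, h0, hc] at e2
  simpa using e2.symm

variable [CharP F 2] [Fintype F]
variable {A : Finset (Fin 3 → F)} {T : (Fin 3 → F) → Finset (Fin 3 → F)}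
  {c : (Fin 3 → F) → (Fin 3 → F)} {κ : (Fin 3 → F) → F} {t : ℕ} {Φ : RR F}

lemma neg2v (m : Fin 3 → F) : -m = m := by funext i; exact neg2 _

lemma Setup.crx (S : Setup A T c κ t Φ) {x m} (hx : x ∈ A) (hm : m ∈ T x) :
    cr x (cr (c x) m) = m := by
  rw [cr_cr', dt_comm x m, dt_comm x, (S.tan x hx).self m hm, S.hc x hx]
  simp [neg2v]

lemma Setup.m0 (S : Setup A T c κ t Φ) (h3 : 3 ≤ A.card) {x m} (hx : x ∈ A) (hm : m ∈ T x) :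
    m ≠ 0 := by
  rintro rfl
  obtain ⟨y, hy, hyx⟩ := Finset.exists_mem_ne (by omega : 1 < A.card) x
  apply (S.tan x hx).ne _ hm y hy hyx
  simp [dt]

lemma Setup.step (S : Setup A T c κ t Φ) (h3 : 3 ≤ A.card) {Y : RR F} {D : ℤ} (hY : HomZ Y D)
    (hv : ∀ x ∈ A, ∀ m ∈ T x, eval m Y = 0) :
    ∃ H M, HomZ H (D - t) ∧ HomZ M (D - A.card) ∧ Y = Φ * H + (∏ x ∈ A, lin x) * M := by
  classical
  have h1 : ∀ x, ∃ h, x ∈ A → HomZ h (D - t) ∧ lin x ∣ Y - h * Φ := by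
    intro x
    by_cases hx : x ∈ A
    swap
    · exact ⟨0, fun h => absurd h hx⟩
    obtain ⟨G, hG, M1, hM1⟩ := lemmaD (T x) (fun m => cr (c x) m) x
      (fun m hm => by rw [S.crx hx hm]; exact S.m0 h3 hx hm)
      (fun m hm m' hm' hmm => by
        rw [S.crx hx hm', dt_cr_comm]
        exact det_c (S.hc x hx) ((S.tan x hx).self m hm) ((S.tan x hx).self m' hm')
          ((S.tan x hx).pw m hm m' hm' hmm)) hY
      (fun m hm => by rw [S.crx hx hm]; exact hv x hx m hm)
    have hTc : (T x).card = t := by have := (S.tan x hx).card; have := S.ht; omega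
    obtain ⟨M2, hM2⟩ := S.dvd x hx
    refine ⟨C (κ x)⁻¹ * G, fun _ => ⟨?_, M1 - C (κ x)⁻¹ * G * M2, ?_⟩⟩
    · rw [← hTc]; exact hG.cmul _
    · have e : (C (κ x)⁻¹ : RR F) * C (κ x) = 1 := by
        rw [← C_mul, inv_mul_cancel₀ (S.hκ x hx), C_1]
      linear_combination hM1 - C (κ x)⁻¹ * G * hM2 - G * (∏ m ∈ T x, lin (cr (c x) m)) * e
  choose h hh using h1
  obtain ⟨H, hH, hd⟩ := gluing A S.arc h (D - t) (fun x hx => (hh x hx).1) (by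
    intro x hx y hy hxy
    obtain ⟨M, hM⟩ := (hh x hx).2
    obtain ⟨N, hN⟩ := (hh y hy).2
    have e1 := congrArg (eval (cr x y)) hM
    have e2 := congrArg (eval (cr x y)) hN
    rw [map_sub, map_mul, map_mul, eval_lin, dt_cr_self] at e1
    rw [map_sub, map_mul, map_mul, eval_lin, dt_cr_self'] at e2
    apply mul_right_cancel₀ (S.val x hx y hy hxy)
    linear_combination e2 - e1)
  have hL : (∏ x ∈ A, lin x) ∣ Y - Φ * H := by
    apply prod_lin_dvd A S.arc S.ne0
    intro x hx
    obtain ⟨M, hM⟩ := (hh x hx).2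
    obtain ⟨N, hN⟩ := hd x hx
    exact ⟨M - Φ * N, by linear_combination hM - Φ * hN⟩
  obtain ⟨M, hM⟩ := hL
  refine ⟨H, Seg.hc (D - A.card) M, hH, hc_homZ _ _, ?_⟩
  have e : HomZ (Y - Φ * H) D := hY.sub ((S.hom.mul hH).cast (by ring))
  have e2 := hc_self e
  rw [hM, hc_mul (HomZ.prod_one A _ fun x _ => lin_homZ x), ← hM] at e2
  linear_combination -e2

noncomputable def ccA : PowerSeries F →ₐ[F] F :=
  { (PowerSeries.constantCoeff : PowerSeries F →+* F) with
    commutes' := fun r => by simp [PowerSeries.algebraMap_apply] }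

@[simp] lemma ccA_apply (z : PowerSeries F) : ccA z = PowerSeries.constantCoeff z := rfl

structure IsBr (Φ : RR F) (x m : Fin 3 → F) (Z : Fin 3 → PowerSeries F) : Prop where
  root : aeval Z Φ = 0
  cc : ∀ i, PowerSeries.constantCoeff (Z i) = m i
  dx : dt (fun i => algebraMap F (PowerSeries F) (x i)) Z = PowerSeries.X

lemma cc_aeval {m : Fin 3 → F} {Z : Fin 3 → PowerSeries F}
    (h : ∀ i, PowerSeries.constantCoeff (Z i) = m i) (Y : RR F) :
    PowerSeries.constantCoeff (aeval Z Y) = eval m Y := by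
  rw [← ccA_apply, MvPolynomial.comp_aeval_apply]
  have : (fun i => ccA (Z i)) = m := by funext i; exact h i
  rw [this, aeval_eq_eval]

lemma Setup.branch (S : Setup A T c κ t Φ) (h3 : 3 ≤ A.card) {x m} (hx : x ∈ A) (hm : m ∈ T x) :
    ∃ Z, IsBr Φ x m Z := by
  classical
  obtain ⟨s, hs⟩ := exists_dt_one (S.m0 h3 hx hm)
  set r := cr x s with hr
  have hmx := (S.tan x hx).self m hm
  have hcr : dt (cr (c x) m) r = 1 := by
    rw [hr, dt_cr_cr, S.hc x hx, hs, hmx]; ring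
  have hxr : dt x r = 0 := dt_cr_self _ _
  obtain ⟨M, hM⟩ := S.dvd x hx
  set v : F → PowerSeries F := fun a => algebraMap F (PowerSeries F) a with hv
  set W : Fin 3 → Polynomial (PowerSeries F) := fun i =>
    Polynomial.C (v (m i) + PowerSeries.X * v (c x i)) + Polynomial.X * Polynomial.C (v (r i)) with hW
  set p : Polynomial (PowerSeries F) := aeval W Φ with hp
  have peval : ∀ η : PowerSeries F, p.eval η =
      aeval (fun i => v (m i) + PowerSeries.X * v (c x i) + η * v (r i)) Φ := by
    intro η
    have := (MvPolynomial.comp_aeval_apply (f := W)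
      ((Polynomial.aeval η : Polynomial (PowerSeries F) →ₐ[PowerSeries F] PowerSeries F).restrictScalars F) Φ)
    have e2 : (Polynomial.aeval η p) = p.eval η := by rw [Polynomial.coe_aeval_eq_eval]
    rw [← e2, hp]
    refine this.trans ?_
    congr 2
    funext i
    simp [hW]
    ring
  set p0 : Polynomial F := aeval (fun i => Polynomial.C (m i) + Polynomial.X * Polynomial.C (r i)) Φ with hp0
  have hmap : p.map PowerSeries.constantCoeff = p0 := by
    have := (MvPolynomial.comp_aeval_apply (f := W) (Polynomial.mapAlgHom (ccA (F := F))) Φ)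
    refine (Eq.trans ?_ this).trans ?_
    · rfl
    · rw [hp0]
      congr 2
      funext i
      simp [hW, hv, PowerSeries.algebraMap_apply]
  have hp0' : p0 = Polynomial.X * (Polynomial.C (κ x) * ∏ m' ∈ (T x).erase m,
      (Polynomial.C (dt (cr (c x) m') m) + Polynomial.X * Polynomial.C (dt (cr (c x) m') r))) := by
    have e := congrArg (aeval (fun i => Polynomial.C (m i) + Polynomial.X * Polynomial.C (r i))) hM
    have el : ∀ y : Fin 3 → F, aeval (fun i => Polynomial.C (m i) + Polynomial.X * Polynomial.C (r i)) (lin y)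
        = Polynomial.C (dt y m) + Polynomial.X * Polynomial.C (dt y r) := by
      intro y
      rw [aeval_lin]
      simp only [dt, Polynomial.algebraMap_eq, map_add, map_mul]
      ring
    rw [map_sub, map_mul, map_mul, map_prod, ← hp0, el, hxr, dt_comm x, hmx] at e
    simp only [el] at e
    rw [← Finset.mul_prod_erase _ _ hm, hcr, dt_comm _ m, dt_cr_self'] at e
    have ec : aeval (fun i => Polynomial.C (m i) + Polynomial.X * Polynomial.C (r i)) (C (κ x) : RR F)
      = Polynomial.C (κ x) := by simp
    rw [ec] at e
    simp only [map_zero, mul_zero, add_zero, zero_add, zero_mul, map_one, mul_one] at e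
    linear_combination e
  have h1 : p.eval 0 ∈ (Ideal.span {PowerSeries.X} : Ideal (PowerSeries F)) := by
    rw [Ideal.mem_span_singleton, PowerSeries.X_dvd_iff]
    have : PowerSeries.constantCoeff (p.eval 0) = p0.eval 0 := by
      rw [← hmap, Polynomial.eval_map, Polynomial.eval, Polynomial.hom_eval₂]; simp
    rw [this, hp0']; simp
  have h2 : IsUnit (p.derivative.eval 0) := by
    rw [PowerSeries.isUnit_iff_constantCoeff, isUnit_iff_ne_zero]
    have : PowerSeries.constantCoeff (p.derivative.eval 0) = p0.derivative.eval 0 := by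
      rw [← hmap, Polynomial.derivative_map, Polynomial.eval_map, Polynomial.eval, Polynomial.hom_eval₂]; simp
    rw [this, hp0', Polynomial.derivative_mul]
    simp only [Polynomial.derivative_X, Polynomial.eval_add, Polynomial.eval_mul, Polynomial.eval_X, zero_mul,
      add_zero, Polynomial.eval_one, one_mul, Polynomial.eval_C, Polynomial.eval_prod]
    refine mul_ne_zero (S.hκ x hx) ?_
    rw [Finset.prod_ne_zero_iff]
    intro m' hm'
    obtain ⟨hne, hm'⟩ := Finset.mem_erase.1 hm'
    rw [dt_cr_comm]
    exact det_c (S.hc x hx) ((S.tan x hx).self m' hm') hmx ((S.tan x hx).pw m' hm' m hm hne)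
  obtain ⟨η, hη, hη0⟩ := newton (Ideal.span {PowerSeries.X}) p 0 h1 (h2.map _)
  rw [sub_zero, Ideal.mem_span_singleton, PowerSeries.X_dvd_iff] at hη0
  refine ⟨fun i => v (m i) + PowerSeries.X * v (c x i) + η * v (r i), ?_, ?_, ?_⟩
  · rw [← peval]; exact hη
  · intro i
    simp [hv, hη0, PowerSeries.algebraMap_apply]
  · have e : dt (fun i => v (x i)) (fun i => v (m i) + PowerSeries.X * v (c x i) + η * v (r i)) =
        v (dt m x) + PowerSeries.X * v (dt (c x) x) + η * v (dt x r) := by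
      simp only [dt, hv, map_add, map_mul]; ring
    refine e.trans ?_
    rw [hmx, S.hc x hx, hxr]; simp [hv]

lemma IsBr.L (S : Setup A T c κ t Φ) {x m Z} (hx : x ∈ A) (hm : m ∈ T x) (hZ : IsBr Φ x m Z) :
    ∃ u, IsUnit u ∧ aeval Z (∏ x ∈ A, lin x) = PowerSeries.X * u := by
  classical
  refine ⟨∏ y ∈ A.erase x, aeval Z (lin y), ?_, ?_⟩
  · rw [PowerSeries.isUnit_iff_constantCoeff, isUnit_iff_ne_zero, map_prod, Finset.prod_ne_zero_iff]
    intro y hy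
    obtain ⟨hne, hy⟩ := Finset.mem_erase.1 hy
    rw [cc_aeval hZ.cc, eval_lin, dt_comm]
    exact (S.tan x hx).ne m hm y hy hne
  · rw [map_prod, ← Finset.mul_prod_erase _ _ hx, aeval_lin, hZ.dx]

lemma Setup.lemmaA (S : Setup A T c κ t Φ) (h3 : 3 ≤ A.card)
    (Z : (Fin 3 → F) → (Fin 3 → F) → Fin 3 → PowerSeries F)
    (hZ : ∀ x ∈ A, ∀ m ∈ T x, IsBr Φ x m (Z x m)) (n : ℕ) :
    ∀ (Y : RR F) (D : ℤ), HomZ Y D → D < n * A.card →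
    (∀ x ∈ A, ∀ m ∈ T x, PowerSeries.X ^ n ∣ aeval (Z x m) Y) → Φ ∣ Y := by
  induction n with
  | zero =>
    intro Y D hY hD _
    rw [hY.eq_zero (by simpa using hD)]
    exact dvd_zero _
  | succ n ih =>
    intro Y D hY hD hd
    obtain ⟨H, M, hH, hM, e⟩ := S.step h3 hY (by
      intro x hx m hm
      rw [← cc_aeval (hZ x hx m hm).cc, ← PowerSeries.X_dvd_iff]
      exact (dvd_pow_self _ (Nat.succ_ne_zero n)).trans (hd x hx m hm))
    rw [e]
    refine dvd_add (dvd_mul_right _ _) (Dvd.dvd.mul_left (ih M _ hM ?_ ?_) _)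
    · push_cast at hD; linarith
    · intro x hx m hm
      obtain ⟨u, hu, e2⟩ := IsBr.L S hx hm (hZ x hx m hm)
      have := hd x hx m hm
      rw [e, map_add, map_mul, (hZ x hx m hm).root, zero_mul, zero_add, map_mul, e2, pow_succ',
        mul_assoc, mul_dvd_mul_iff_left PowerSeries.X_ne_zero] at this
      exact (hu.dvd_mul_left).1 this
end
end Seg

namespace Seg
set_option linter.unusedSectionVars false
set_option linter.unusedSimpArgs false
open MvPolynomial

section
variable {F : Type*} [Field F]

/-- the polynomial `Φ(Z + s V)` in the variable `s` -/
noncomputable def pl {B : Type*} [CommRing B] [Algebra F B] (Φ : RR F) (Z V : Fin 3 → B) :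
    Polynomial B :=
  aeval (fun i => Polynomial.C (Z i) + Polynomial.X * Polynomial.C (V i)) Φ

lemma pl_map {B B' : Type*} [CommRing B] [Algebra F B] [CommRing B'] [Algebra F B'] (f : B →ₐ[F] B')
    (Φ : RR F) (Z V : Fin 3 → B) :
    (pl Φ Z V).map (f : B →+* B') = pl Φ (fun i => f (Z i)) (fun i => f (V i)) := by
  have := (MvPolynomial.comp_aeval_apply
    (f := fun i => Polynomial.C (Z i) + Polynomial.X * Polynomial.C (V i)) (Polynomial.mapAlgHom f) Φ)
  refine (Eq.trans ?_ this).trans ?_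
  · rfl
  · unfold pl
    congr 2
    funext i
    simp

lemma pl_eval {B : Type*} [CommRing B] [Algebra F B] (Φ : RR F) (Z V : Fin 3 → B) (a : B) :
    (pl Φ Z V).eval a = aeval (fun i => Z i + a * V i) Φ := by
  have := (MvPolynomial.comp_aeval_apply
    (f := fun i => Polynomial.C (Z i) + Polynomial.X * Polynomial.C (V i))
    ((Polynomial.aeval a : Polynomial B →ₐ[B] B).restrictScalars F) Φ)
  rw [← Polynomial.coe_aeval_eq_eval]
  refine this.trans ?_
  congr 2
  funext i
  simp
  ring

lemma pl_comp {B : Type*} [CommRing B] [Algebra F B] (Φ : RR F) (Z V : Fin 3 → B) (a : B) :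
    pl Φ Z (fun i => a * V i) = (pl Φ Z V).comp (Polynomial.C a * Polynomial.X) := by
  have := (MvPolynomial.comp_aeval_apply
    (f := fun i => Polynomial.C (Z i) + Polynomial.X * Polynomial.C (V i))
    ((Polynomial.aeval (Polynomial.C a * Polynomial.X) : Polynomial B →ₐ[B] Polynomial B).restrictScalars F) Φ)
  rw [Polynomial.comp_eq_aeval]
  refine Eq.trans ?_ this.symm
  unfold pl
  congr 2
  funext i
  simp [Polynomial.algebraMap_eq]
  ring

/-- value in power series -/
lemma pl_coe {B : Type*} [CommRing B] [Algebra F B] (Φ : RR F) (Z V : Fin 3 → B) :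
    ((pl Φ Z V : Polynomial B) : PowerSeries B) =
      aeval (fun i => PowerSeries.C (Z i) + PowerSeries.X * PowerSeries.C (V i)) Φ := by
  have := (MvPolynomial.comp_aeval_apply
    (f := fun i => Polynomial.C (Z i) + Polynomial.X * Polynomial.C (V i))
    ((Polynomial.coeToPowerSeries.algHom (R := B) B).restrictScalars F) Φ)
  refine (Eq.trans ?_ this).trans ?_
  · simp [pl, Polynomial.coeToPowerSeries.algHom_apply]
  · congr 2
    funext i
    simp [Polynomial.coeToPowerSeries.algHom_apply]
    ring

lemma pl_natDegree {B : Type*} [CommRing B] [Algebra F B] {Φ : RR F} {t : ℕ} (h : HomZ Φ t)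
    (Z V : Fin 3 → B) : (pl Φ Z V).natDegree ≤ t := by
  unfold pl
  rw [aeval_def, eval₂_eq]
  refine Polynomial.natDegree_sum_le_of_forall_le _ _ ?_
  intro m hm
  have hd : ∑ i ∈ m.support, m i = t := by
    have h1 := h m (by simpa using hm)
    have h2 : m.degree = t := by exact_mod_cast h1
    rw [← h2]; rfl
  have h0 : (algebraMap F (Polynomial B)) (coeff m Φ) = Polynomial.C (algebraMap F B (coeff m Φ)) := rfl
  rw [h0]
  refine (Polynomial.natDegree_C_mul_le _ _).trans ?_
  refine (Polynomial.natDegree_prod_le _ _).trans ?_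
  rw [← hd]
  refine Finset.sum_le_sum fun i _ => ?_
  refine (Polynomial.natDegree_pow_le).trans ?_
  have : (Polynomial.C (Z i) + Polynomial.X * Polynomial.C (V i)).natDegree ≤ 1 := by
    compute_degree
  nlinarith

/-- comparison of the expansions in the directions `V` and `Z + V` -/
lemma pl_shift {B : Type*} [CommRing B] [Algebra F B] {Φ : RR F} {t : ℕ} (h : HomZ Φ t)
    (Z V : Fin 3 → B) (j : ℕ) (hj : ∀ i < j, (pl Φ Z (fun i => Z i + V i)).coeff i = 0) :
    (∀ i < j, (pl Φ Z V).coeff i = 0) ∧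
      (pl Φ Z V).coeff j = (pl Φ Z (fun i => Z i + V i)).coeff j := by
  set f := pl Φ Z (fun i => Z i + V i) with hf
  obtain ⟨g, hg⟩ := (Polynomial.X_pow_dvd_iff).2 hj
  have hun : IsUnit (1 - PowerSeries.X : PowerSeries B) := by
    rw [PowerSeries.isUnit_iff_constantCoeff]; simp
  obtain ⟨u, hu⟩ := hun.exists_right_inv
  have hcu : PowerSeries.constantCoeff u = 1 := by
    have := congrArg PowerSeries.constantCoeff hu
    simpa using this
  set σ : PowerSeries B := PowerSeries.X * u with hσ
  have fe : ∀ r : Polynomial B, ∃ w : PowerSeries B, w = Polynomial.aeval σ r ∧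
      PowerSeries.constantCoeff w = r.coeff 0 := by
    intro r
    refine ⟨_, rfl, ?_⟩
    rw [Polynomial.aeval_def, Polynomial.hom_eval₂]
    have : PowerSeries.constantCoeff σ = 0 := by simp [hσ]
    rw [this, Polynomial.eval₂_at_zero]
    simp [PowerSeries.algebraMap_apply]
  have e1 : Polynomial.aeval σ f = aeval (fun i => PowerSeries.C (Z i) + σ * PowerSeries.C (Z i + V i)) Φ := by
    have := (MvPolynomial.comp_aeval_apply
      (f := fun i => Polynomial.C (Z i) + Polynomial.X * Polynomial.C (Z i + V i))
      ((Polynomial.aeval σ : Polynomial B →ₐ[B] PowerSeries B).restrictScalars F) Φ)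
    refine this.trans ?_
    congr 2
    funext i
    simp [PowerSeries.algebraMap_apply]
    try ring
  have e2 : ((pl Φ Z V : Polynomial B) : PowerSeries B) = (1 - PowerSeries.X) ^ t * Polynomial.aeval σ f := by
    rw [pl_coe, e1, ← h.aeval_smul]
    congr 2
    funext i
    rw [map_add]
    have : (1 - PowerSeries.X) * σ = PowerSeries.X := by
      rw [hσ]; linear_combination PowerSeries.X * hu
    linear_combination -(PowerSeries.C (Z i) + PowerSeries.C (V i)) * this
  rw [hg, map_mul, map_pow, Polynomial.aeval_X] at e2
  obtain ⟨w, hw, hcw⟩ := fe g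
  rw [← hw] at e2
  have e3 : ((pl Φ Z V : Polynomial B) : PowerSeries B) =
      PowerSeries.X ^ j * ((1 - PowerSeries.X) ^ t * u ^ j * w) := by
    rw [e2, hσ]; ring
  constructor
  · intro i hi
    rw [← Polynomial.coeff_coe, e3, PowerSeries.coeff_X_pow_mul', if_neg (by omega)]
  · rw [← Polynomial.coeff_coe, e3, PowerSeries.coeff_X_pow_mul', if_pos le_rfl, hg,
      Polynomial.coeff_X_pow_mul', if_pos le_rfl]
    simp [hcu, hcw]

/-- graded pieces -/
def Hq (q : ℕ) (d : ℤ) (p : Polynomial (RR F)) : Prop := ∀ j, HomZ (p.coeff j) (d + j * ((q : ℤ) - 1))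

lemma Hq.mul {q : ℕ} {d e : ℤ} {p r : Polynomial (RR F)} (hp : Hq q d p) (hr : Hq q e r) :
    Hq q (d + e) (p * r) := by
  intro j
  rw [Polynomial.coeff_mul]
  refine HomZ.sum _ _ _ ?_
  intro a ha
  rw [Finset.HasAntidiagonal.mem_antidiagonal] at ha
  refine ((hp a.1).mul (hr a.2)).cast ?_
  rw [← ha]; push_cast; ring

lemma Hq.C {q : ℕ} {d : ℤ} {Y : RR F} (h : HomZ Y d) : Hq q d (Polynomial.C Y) := by
  intro j
  rw [Polynomial.coeff_C]
  split_ifs with h0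
  · subst h0; simpa using h
  · exact HomZ.zero _

lemma Hq.pow {q : ℕ} {p : Polynomial (RR F)} (hp : Hq q 1 p) (n : ℕ) : Hq q n (p ^ n) := by
  induction n with
  | zero => simpa using Hq.C (q := q) (HomZ.one (F := F))
  | succ n ih => rw [pow_succ]; simpa using ih.mul hp

lemma Hq.prod {q : ℕ} {ι : Type*} (s : Finset ι) (p : ι → Polynomial (RR F)) (d : ι → ℕ)
    (h : ∀ i ∈ s, Hq q (d i) (p i)) : Hq q ((∑ i ∈ s, d i : ℕ)) (∏ i ∈ s, p i) := by
  classical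
  induction s using Finset.induction_on with
  | empty => simpa using Hq.C (q := q) (HomZ.one (F := F))
  | insert a s ha ih =>
    rw [Finset.prod_insert ha, Finset.sum_insert ha]
    push_cast
    exact (h a (by simp)).mul (by simpa using ih fun i hi => h i (by simp [hi]))

/-- the polynomials `Y_j` -/
noncomputable def YY (q : ℕ) (Φ : RR F) : Polynomial (RR F) := pl Φ X (fun i => X i ^ q)

lemma YY_hom {q : ℕ} {Φ : RR F} {t : ℕ} (h : HomZ Φ t) : Hq q t (YY q Φ) := by
  intro j
  unfold YY pl
  rw [aeval_def, eval₂_eq, Polynomial.finsetSum_coeff]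
  refine HomZ.sum _ _ _ ?_
  intro m hm
  have hd : ∑ i ∈ m.support, m i = t := by
    have h1 := h m (by simpa using hm)
    have h2 : m.degree = t := by exact_mod_cast h1
    rw [← h2]; rfl
  have h0 : (algebraMap F (Polynomial (RR F))) (coeff m Φ) = Polynomial.C (MvPolynomial.C (coeff m Φ)) := rfl
  rw [h0, Polynomial.coeff_C_mul]
  refine HomZ.cmul _ ?_
  have := Hq.prod (q := q) m.support
    (fun i => (Polynomial.C (X i : RR F) + Polynomial.X * Polynomial.C (X i ^ q)) ^ m i) (fun i => m i) (by
      intro i _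
      apply Hq.pow
      intro j
      rcases j with _ | _ | j
      · simpa using HomZ.X i
      · rw [Polynomial.coeff_add, Polynomial.coeff_X_mul, Polynomial.coeff_C_zero, Polynomial.coeff_C,
          if_neg (by omega), zero_add]
        exact ((HomZ.X (F := F) i).pow q).cast (by push_cast; ring)
      · rw [Polynomial.coeff_add, Polynomial.coeff_X_mul, Polynomial.coeff_C, Polynomial.coeff_C,
          if_neg (by omega), if_neg (by omega), zero_add]
        exact HomZ.zero _)
  rw [hd] at this
  exact this j

lemma YY_aeval {B : Type*} [CommRing B] [Algebra F B] (q : ℕ) (Φ : RR F) (Z : Fin 3 → B) (j : ℕ) :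
    aeval Z ((YY q Φ).coeff j) = (pl Φ Z (fun i => Z i ^ q)).coeff j := by
  have := pl_map (aeval Z) Φ X (fun i => X i ^ q)
  simp only [aeval_X, map_pow] at this
  rw [← this, Polynomial.coeff_map]
  rfl

lemma YY_zero (q : ℕ) (Φ : RR F) : (YY q Φ).coeff 0 = Φ := by
  rw [Polynomial.coeff_zero_eq_eval_zero, YY, pl_eval]
  simp

variable [CharP F 2] [Fintype F]
variable {A : Finset (Fin 3 → F)} {T : (Fin 3 → F) → Finset (Fin 3 → F)}
  {c : (Fin 3 → F) → (Fin 3 → F)} {κ : (Fin 3 → F) → F} {t : ℕ} {Φ : RR F}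

lemma frob_aeval {B : Type*} [CommRing B] [Algebra F B] (Z : Fin 3 → B) (Y : RR F) :
    aeval (fun i => Z i ^ (Fintype.card F)) Y = (aeval Z Y) ^ (Fintype.card F) := by
  have := MvPolynomial.comp_aeval_apply (f := Z) (FiniteField.frobeniusAlgHom F B) Y
  exact this.symm

lemma IsBr.exists_u {x m Z} (hZ : IsBr Φ x m Z) :
    ∃ u : Fin 3 → PowerSeries F, (∀ i, Z i ^ (Fintype.card F) = Z i + PowerSeries.X * u i) ∧
      dt x (fun i => PowerSeries.constantCoeff (u i)) = -1 := by
  have h1 : ∀ i, ∃ u, Z i ^ (Fintype.card F) - Z i = PowerSeries.X * u := by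
    intro i
    have : PowerSeries.X ∣ Z i ^ (Fintype.card F) - Z i := by
      rw [PowerSeries.X_dvd_iff, map_sub, map_pow, FiniteField.pow_card, sub_self]
    exact this
  choose u hu using h1
  refine ⟨u, fun i => by rw [← hu]; ring, ?_⟩
  have e1 := frob_aeval Z (lin x)
  rw [aeval_lin, aeval_lin, hZ.dx] at e1
  have e2 : dt (fun i => algebraMap F (PowerSeries F) (x i)) (fun i => Z i ^ Fintype.card F) =
    PowerSeries.X + PowerSeries.X * dt (fun i => algebraMap F (PowerSeries F) (x i)) u := by
    conv_lhs => rw [← add_sub_cancel (dt (fun i => algebraMap F (PowerSeries F) (x i)) Z)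
      (dt (fun i => algebraMap F (PowerSeries F) (x i)) (fun i => Z i ^ Fintype.card F))]
    rw [hZ.dx]
    congr 1
    rw [← hZ.dx]
    have a0 := hu 0
    have a1 := hu 1
    have a2 := hu 2
    rw [← hZ.dx] at a0 a1 a2
    simp only [dt] at a0 a1 a2 ⊢
    linear_combination (algebraMap F (PowerSeries F) (x 0)) * a0 + (algebraMap F (PowerSeries F) (x 1)) * a1 +
      (algebraMap F (PowerSeries F) (x 2)) * a2
  rw [e1] at e2
  have hq : 1 < Fintype.card F := Fintype.one_lt_card
  obtain ⟨n, hn⟩ : ∃ n, Fintype.card F = n + 2 := ⟨Fintype.card F - 2, by omega⟩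
  rw [hn, pow_succ'] at e2
  have e3 : (PowerSeries.X : PowerSeries F) ^ (n + 1) = 1 + dt (fun i => algebraMap F (PowerSeries F) (x i)) u := by
    apply mul_left_cancel₀ (PowerSeries.X_ne_zero (R := F))
    rw [e2]; ring
  have e4 := congrArg PowerSeries.constantCoeff e3
  simp [dt] at e4 ⊢
  linear_combination -e4

lemma Setup.main (S : Setup A T c κ t Φ) (h3 : 3 ≤ A.card) (ht1 : 1 ≤ t)
    (hq : ((t : ℤ) - 1) ^ 2 < Fintype.card F)
    (Z : (Fin 3 → F) → (Fin 3 → F) → Fin 3 → PowerSeries F)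
    (hZ : ∀ x ∈ A, ∀ m ∈ T x, IsBr Φ x m (Z x m)) (j : ℕ) : j < t →
    Φ ∣ (YY (Fintype.card F) Φ).coeff j := by
  induction j using Nat.strong_induction_on with
  | _ j ih =>
  intro hj
  rcases Nat.eq_zero_or_pos j with rfl | hj0
  · rw [YY_zero]
  refine S.lemmaA h3 Z hZ (j + 1) _ _ (YY_hom S.hom j) ?_ ?_
  · have := S.ht
    have hk : (A.card : ℤ) = Fintype.card F + 2 - t := by omega
    rw [hk]
    push_cast
    set Q : ℤ := (Fintype.card F : ℤ)
    have h1 : (1 : ℤ) ≤ j := by omega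
    have h2 : (j : ℤ) ≤ t - 1 := by omega
    rcases le_or_gt (3 : ℤ) t with h | h
    · nlinarith
    · have : (t : ℤ) = 2 := by omega
      have hj1 : (j : ℤ) = 1 := by omega
      rw [this] at hq ⊢; rw [hj1]; linarith
  · intro x hx m hm
    have hb := hZ x hx m hm
    obtain ⟨u, hu, -⟩ := hb.exists_u
    have hfun : (fun i => Z x m i ^ Fintype.card F) = (fun i => Z x m i + PowerSeries.X * u i) := funext hu
    have hlow : ∀ i < j, (pl Φ (Z x m) (fun i => Z x m i + PowerSeries.X * u i)).coeff i = 0 := by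
      intro i hi
      rw [← hfun, ← YY_aeval]
      obtain ⟨M, hM⟩ := ih i hi (by omega)
      rw [hM, map_mul, hb.root, zero_mul]
    obtain ⟨k1, k2⟩ := pl_shift S.hom (Z x m) (fun i => PowerSeries.X * u i) j hlow
    rw [YY_aeval, hfun, ← k2]
    have hdiv : ∀ i, PowerSeries.X ^ i ∣ (pl Φ (Z x m) (fun i => PowerSeries.X * u i)).coeff i := by
      intro i
      rw [pl_comp, Polynomial.comp_C_mul_X_coeff]
      exact dvd_mul_left _ _
    have hev : (pl Φ (Z x m) (fun i => PowerSeries.X * u i)).eval 1 = 0 := by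
      rw [pl_eval]
      simp only [one_mul, ← hu]
      rw [frob_aeval, hb.root, zero_pow Fintype.card_ne_zero]
    rw [Polynomial.eval_eq_sum_range] at hev
    set p := pl Φ (Z x m) (fun i => PowerSeries.X * u i)
    by_cases hjd : j ∈ Finset.range (p.natDegree + 1)
    · rw [← Finset.add_sum_erase _ _ hjd] at hev
      simp only [one_pow, mul_one] at hev
      have : p.coeff j = - ∑ i ∈ (Finset.range (p.natDegree + 1)).erase j, p.coeff i := by
        linear_combination hev
      rw [this, dvd_neg]
      refine Finset.dvd_sum ?_
      intro i hi
      rw [Finset.mem_erase] at hi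
      rcases lt_or_gt_of_ne hi.1 with h | h
      · rw [k1 i h]; exact dvd_zero _
      · exact (pow_dvd_pow _ h).trans (hdiv i)
    · rw [Polynomial.coeff_eq_zero_of_natDegree_lt (by simpa using hjd)]
      exact dvd_zero _

lemma Setup.line (S : Setup A T c κ t Φ) (h3 : 3 ≤ A.card) (ht1 : 1 ≤ t)
    (hq : ((t : ℤ) - 1) ^ 2 < Fintype.card F) (hq2 : 2 < Fintype.card F) :
    ∃ N : Fin 3 → F, ∀ Q, dt N Q = 0 → eval Q Φ = 0 := by
  classical
  have hbr : ∀ x m, ∃ Z, x ∈ A → m ∈ T x → IsBr Φ x m Z := by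
    intro x m
    by_cases h : x ∈ A ∧ m ∈ T x
    · obtain ⟨Z, hZ⟩ := S.branch h3 h.1 h.2
      exact ⟨Z, fun _ _ => hZ⟩
    · exact ⟨0, fun h1 h2 => absurd ⟨h1, h2⟩ h⟩
  choose Z hZ' using hbr
  have hZ : ∀ x ∈ A, ∀ m ∈ T x, IsBr Φ x m (Z x m) := fun x hx m hm => hZ' x m hx hm
  have hmain := S.main h3 ht1 hq Z hZ
  obtain ⟨x, hx⟩ : A.Nonempty := Finset.card_pos.1 (by omega)
  have hTc : (T x).card = t := by have := (S.tan x hx).card; have := S.ht; omega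
  obtain ⟨m, hm⟩ : (T x).Nonempty := Finset.card_pos.1 (by omega)
  have hb := hZ x hx m hm
  have hmx := (S.tan x hx).self m hm
  have hm0 := S.m0 h3 hx hm
  obtain ⟨u, hu, hdu⟩ := hb.exists_u
  set e : Fin 3 → F := fun i => PowerSeries.constantCoeff (u i) with he
  have hfun : (fun i => Z x m i ^ Fintype.card F) = (fun i => Z x m i + PowerSeries.X * u i) := funext hu
  have hlow : ∀ i < t, (pl Φ (Z x m) (fun i => Z x m i + PowerSeries.X * u i)).coeff i = 0 := by
    intro i hi
    rw [← hfun, ← YY_aeval]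
    obtain ⟨M, hM⟩ := hmain i hi
    rw [hM, map_mul, hb.root, zero_mul]
  obtain ⟨k1, -⟩ := pl_shift S.hom (Z x m) (fun i => PowerSeries.X * u i) t hlow
  have hev : (pl Φ (Z x m) (fun i => PowerSeries.X * u i)).eval 1 = 0 := by
    rw [pl_eval]
    simp only [one_mul, ← hu]
    rw [frob_aeval, hb.root, zero_pow Fintype.card_ne_zero]
  have hdeg := pl_natDegree S.hom (Z x m) (fun i => PowerSeries.X * u i)
  have hp0 : pl Φ (Z x m) (fun i => PowerSeries.X * u i) = 0 := by
    rw [Polynomial.eval_eq_sum_range' (n := t + 1) (by omega), Finset.sum_range_succ,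
      Finset.sum_eq_zero (fun i hi => by rw [k1 i (Finset.mem_range.1 hi), zero_mul])] at hev
    simp only [one_pow, mul_one, zero_add] at hev
    ext1 i
    rw [Polynomial.coeff_zero]
    rcases lt_trichotomy i t with h | h | h
    · exact k1 i h
    · rw [h]; exact hev
    · exact Polynomial.coeff_eq_zero_of_natDegree_lt (by omega)
  have hp1 : pl Φ (Z x m) u = 0 := by
    ext1 i
    have := congrArg (fun p => Polynomial.coeff p i) hp0
    simp only [Polynomial.coeff_zero] at this
    rw [pl_comp, Polynomial.comp_C_mul_X_coeff] at this
    exact (mul_eq_zero.1 this).resolve_right (pow_ne_zero _ PowerSeries.X_ne_zero)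
  have hp2 : pl Φ m e = 0 := by
    have := pl_map (ccA (F := F)) Φ (Z x m) u
    rw [hp1, Polynomial.map_zero] at this
    rw [this]
    congr 1
    funext i
    exact (hb.cc i).symm
  have hval : ∀ a : F, eval (fun i => m i + a * e i) Φ = 0 := by
    intro a
    rw [← aeval_eq_eval, ← pl_eval, hp2, Polynomial.eval_zero]
  have hscale : ∀ (a : F) (v : Fin 3 → F), eval (fun i => a * v i) Φ = a ^ t * eval v Φ := by
    intro a v
    have := S.hom.aeval_smul (S := F) a v
    rwa [aeval_eq_eval, aeval_eq_eval] at this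
  have hgen : ∀ a b : F, a ≠ 0 → eval (fun i => a * m i + b * e i) Φ = 0 := by
    intro a b ha
    have : (fun i => a * m i + b * e i) = fun i => a * (m i + (b / a) * e i) := by
      funext i; field_simp
    rw [this, hscale, hval, mul_zero]
  have htq : t < Fintype.card F - 1 := by
    by_contra hcon
    have h1 : (Fintype.card F : ℤ) - 2 ≤ t - 1 := by omega
    have h2 : (3 : ℤ) ≤ Fintype.card F := by omega
    have h4 : Fintype.card F ≠ 3 := by
      intro h
      have := Nat.cast_card_eq_zero F
      rw [h] at this
      have h5 : (3 : F) = 2 + 1 := by norm_num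
      rw [Nat.cast_ofNat, h5, CharTwo.two_eq_zero] at this
      simp at this
    have h2 : (4 : ℤ) ≤ Fintype.card F := by omega
    nlinarith
  have hgE : pl Φ e m = 0 := by
    refine Polynomial.eq_zero_of_natDegree_lt_card_of_eval_eq_zero' _ (Finset.univ.erase 0) ?_ ?_
    · intro a ha
      rw [pl_eval, aeval_eq_eval]
      have := hgen a 1 (Finset.ne_of_mem_erase ha)
      have hfe : (fun i => e i + a * m i) = fun i => a * m i + 1 * e i := by
        funext i; ring
      rw [hfe]; exact this
    · rw [Finset.card_erase_of_mem (Finset.mem_univ _), Finset.card_univ]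
      exact lt_of_le_of_lt (pl_natDegree S.hom e m) htq
  have hE : eval e Φ = 0 := by
    have := pl_eval Φ e m 0
    rw [hgE] at this
    simpa [aeval_eq_eval] using this.symm
  have hall : ∀ a b : F, eval (fun i => a * m i + b * e i) Φ = 0 := by
    intro a b
    by_cases ha : a = 0
    · subst ha
      simp only [zero_mul, zero_add]
      rw [hscale, hE, mul_zero]
    · exact hgen a b ha
  refine ⟨cr m e, fun Q hQ => ?_⟩
  set Q' : Fin 3 → F := Q + dt x Q • e with hQ'
  have hQx : dt Q' x = 0 := by
    have : dt Q' x = dt x Q + dt x Q * dt x e := by simp [hQ', dt]; ring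
    rw [this, hdu]; ring
  have hw : cr m Q' = 0 := by
    by_contra hne
    refine det_c (c := -e) (x := x) ?_ hmx hQx hne ?_
    · have : dt (-e) x = - dt x e := by simp [dt]; ring
      rw [this, hdu, neg_neg]
    · have : dt (-e) (cr m Q') = dt (cr m e) Q := by simp [hQ', dt]; ring
      rw [this, hQ]
  obtain ⟨s, hs⟩ := exists_dt_one hm0
  have hlin := cr_cr m Q' s
  rw [hw, cr_zero_left, hs, one_smul] at hlin
  have hQe : Q = fun i => dt Q' s * m i + (- dt x Q) * e i := by
    funext i
    have := congrFun hlin i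
    simp [hQ'] at this
    simp [hQ']
    linear_combination -this
  rw [hQe]
  exact hall _ _

lemma extend {A : Finset (Fin 3 → F)} (hA : Arc A) (h3 : 3 ≤ A.card) (hlt : A.card < Fintype.card F + 2)
    (hq : ((Fintype.card F : ℤ) + 1 - A.card) ^ 2 < Fintype.card F) (hq2 : 2 < Fintype.card F) :
    ∃ N, N ∉ A ∧ ∃ B, Arc B ∧ (∀ y, y ∈ B ↔ y = N ∨ y ∈ A) ∧ B.card = A.card + 1 := by
  classical
  obtain ⟨T, c, κ, t, Φ, S⟩ := exists_setup hA h3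
  have ht := S.ht
  obtain ⟨N, hN⟩ := S.line h3 (by omega) (by
    have : (t : ℤ) - 1 = Fintype.card F + 1 - A.card := by omega
    rw [this]; exact hq) hq2
  have hdet : ∀ x ∈ A, ∀ y ∈ A, x ≠ y → dt N (cr x y) ≠ 0 :=
    fun x hx y hy hxy h => S.val x hx y hy hxy (hN _ h)
  have hcr : ∀ x ∈ A, cr N x ≠ 0 := by
    intro x hx h
    obtain ⟨y, hy, hyx⟩ := Finset.exists_mem_ne (by omega : 1 < A.card) x
    apply hdet x hx y hy hyx.symm
    rw [← dt_cr_comm, h]; simp [dt]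
  have hNA : N ∉ A := fun h => hcr N h (cr_self _)
  refine ⟨N, hNA, insert N A, ⟨?_, ?_⟩, by simp, Finset.card_insert_of_notMem hNA⟩
  · intro x hx y hy hxy
    rw [Finset.mem_insert] at hx hy
    rcases hx with hx | hx
    · rcases hy with hy | hy
      · exact absurd (hx.trans hy.symm) hxy
      · rw [hx]; exact hcr y hy
    · rcases hy with hy | hy
      · rw [hy, cr_anti, neg_ne_zero]; exact hcr x hx
      · exact hA.pair x hx y hy hxy
  · intro x hx y hy z hz hxy hxz hyz
    rw [Finset.mem_insert] at hx hy hz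
    rcases hx with hx | hx
    · have hy' := hy.resolve_left (fun h => hxy (hx.trans h.symm))
      have hz' := hz.resolve_left (fun h => hxz (hx.trans h.symm))
      rw [hx]
      exact hdet y hy' z hz' hyz
    rcases hy with hy | hy
    · have hz' := hz.resolve_left (fun h => hyz (hy.trans h.symm))
      rw [dt_cr_rot, hy]
      exact hdet z hz' x hx hxz.symm
    rcases hz with hz | hz
    · rw [dt_cr_rot, dt_cr_rot, hz]
      exact hdet x hx y hy hxy
    exact hA.tri x hx y hy z hz hxy hxz hyz
end
end Seg

namespace Seg
section
variable {F : Type*} [Field F]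

lemma meet [Fintype F] {A : Finset (Fin 3 → F)} (hA : Arc A) (hc : A.card = Fintype.card F + 2)
    {x P : Fin 3 → F} (hx : x ∈ A) (hP : cr P x ≠ 0) : ∃ y ∈ A, y ≠ x ∧ dt P (cr x y) = 0 := by
  classical
  by_contra hcon
  push Not at hcon
  obtain ⟨c, hcc⟩ := exists_dt_one hP
  have hinj : Set.InjOn (fun y => dt c (cr x y) / dt P (cr x y)) (A.erase x : Finset _) := by
    intro y hy z hz hyz
    by_contra hne
    obtain ⟨hyx, hyA⟩ := Finset.mem_erase.1 (Finset.mem_coe.1 hy)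
    obtain ⟨hzx, hzA⟩ := Finset.mem_erase.1 (Finset.mem_coe.1 hz)
    have h1 := hcon y hyA hyx
    have h2 := hcon z hzA hzx
    simp only at hyz
    rw [div_eq_div_iff h1 h2] at hyz
    have hm : (dt P (cr x y) • cr x z - dt P (cr x z) • cr x y : Fin 3 → F) = 0 := by
      refine nondeg (x := P) (y := x) (z := c) ?_ ?_ ?_ ?_
      · rw [← dt_cr_comm, hcc]; exact one_ne_zero
      · simp [dt]; ring
      · simp [dt]; ring
      · simp only [dt, cr0, cr1, cr2, Pi.sub_apply, Pi.smul_apply, smul_eq_mul] at hyz ⊢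
        linear_combination -hyz
    have h3 := hA.tri y hyA x hx z hzA hyx hne (Ne.symm hzx)
    apply mul_ne_zero h1 h3
    have h4 : dt y (dt P (cr x y) • cr x z - dt P (cr x z) • cr x y : Fin 3 → F) = 0 := by
      rw [hm]; simp [dt]
    rw [← h4]
    simp [dt]; ring
  have := Finset.card_le_card_of_injOn (t := (Finset.univ : Finset F)) _ (fun _ _ => Finset.mem_coe.2 (Finset.mem_univ _)) hinj
  rw [Finset.card_erase_of_mem hx, Finset.card_univ] at this
  omega

lemma coll_iff {P Q R : PGPoint F 2} {u v w : Fin 3 → F} (hP : P.submodule = Submodule.span F {u})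
    (hQ : Q.submodule = Submodule.span F {v}) (hR : R.submodule = Submodule.span F {w}) :
    Coll3 P Q R ↔ dt u (cr v w) = 0 := by
  have hs : P.submodule ⊔ Q.submodule ⊔ R.submodule = Submodule.span F (Set.range ![u, v, w]) := by
    rw [hP, hQ, hR, ← Submodule.span_union, ← Submodule.span_union]
    congr 1
    ext z
    simp [Matrix.range_cons]
  have hd : (Matrix.of ![u, v, w]).det = dt u (cr v w) := by
    rw [Matrix.det_fin_three]; simp [dt]; ring
  have hli : LinearIndependent F ![u, v, w] ↔ dt u (cr v w) ≠ 0 := by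
    rw [← hd, ← isUnit_iff_ne_zero, ← Matrix.isUnit_iff_isUnit_det,
      ← Matrix.linearIndependent_rows_iff_isUnit]
    rfl
  have hle : Set.finrank F (Set.range ![u, v, w]) ≤ 3 := by
    simpa using finrank_range_le_card (R := F) ![u, v, w]
  unfold Coll3
  rw [hs]
  change Set.finrank F (Set.range ![u, v, w]) ≤ 2 ↔ _
  rw [linearIndependent_iff_card_eq_finrank_span] at hli
  simp only [Fintype.card_fin] at hli
  constructor
  · intro h
    by_contra h0
    have := hli.2 h0
    omega
  · intro h
    by_contra h0
    exact hli.1 (by omega) h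

lemma coll_rep {P Q R : PGPoint F 2} : Coll3 P Q R ↔ dt P.rep (cr Q.rep R.rep) = 0 :=
  coll_iff P.submodule_eq Q.submodule_eq R.submodule_eq

lemma cr_rep {P Q : PGPoint F 2} (h : P ≠ Q) : cr P.rep Q.rep ≠ 0 := by
  intro h0
  apply h
  rw [← P.mk_rep, ← Q.mk_rep, Projectivization.mk_eq_mk_iff']
  obtain ⟨c, hc⟩ := exists_dt_one Q.rep_nonzero
  refine ⟨dt P.rep c, ?_⟩
  funext i
  have a0 := congrFun h0 0
  have a1 := congrFun h0 1
  have a2 := congrFun h0 2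
  simp only [cr0, cr1, cr2, Pi.zero_apply] at a0 a1 a2
  simp only [Pi.smul_apply, smul_eq_mul]
  rw [← mul_one (P.rep i), ← hc]
  simp only [dt]
  fin_cases i
  · simp; linear_combination -c 1 * a2 + c 2 * a1
  · simp; linear_combination c 0 * a2 - c 2 * a0
  · simp; linear_combination -c 0 * a1 + c 1 * a0

lemma rep_inj : Function.Injective (Projectivization.rep : PGPoint F 2 → Fin 3 → F) := by
  intro P Q h
  rw [← P.mk_rep, ← Q.mk_rep]; congr

open Classical in
noncomputable def reps (K : Finset (PGPoint F 2)) : Finset (Fin 3 → F) := K.image Projectivization.rep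

lemma mem_reps {K : Finset (PGPoint F 2)} {v : Fin 3 → F} : v ∈ reps K ↔ ∃ P ∈ K, P.rep = v := by
  simp [reps]

lemma card_reps (K : Finset (PGPoint F 2)) : (reps K).card = K.card := by
  classical
  exact Finset.card_image_of_injective _ rep_inj

lemma arc_reps {K : Finset (PGPoint F 2)} (h : IsCap (K : Set (PGPoint F 2))) : Arc (reps K) := by
  constructor
  · intro x hx y hy hxy
    obtain ⟨P, hP, rfl⟩ := mem_reps.1 hx
    obtain ⟨Q, hQ, rfl⟩ := mem_reps.1 hy
    exact cr_rep (fun h => hxy (by rw [h]))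
  · intro x hx y hy z hz hxy hxz hyz
    obtain ⟨P, hP, rfl⟩ := mem_reps.1 hx
    obtain ⟨Q, hQ, rfl⟩ := mem_reps.1 hy
    obtain ⟨R, hR, rfl⟩ := mem_reps.1 hz
    intro h0
    exact h P hP Q hQ R hR (fun h => hxy (by rw [h])) (fun h => hxz (by rw [h]))
      (fun h => hyz (by rw [h])) (coll_rep.2 h0)

lemma step [CharP F 2] [Fintype F] {K : Finset (PGPoint F 2)} (hK : IsCap (K : Set (PGPoint F 2)))
    (h3 : 3 ≤ K.card) (hlt : K.card < Fintype.card F + 2)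
    (hq : ((Fintype.card F : ℤ) + 1 - K.card) ^ 2 < Fintype.card F) (hq2 : 2 < Fintype.card F) :
    ∃ L : Finset (PGPoint F 2), IsCap (L : Set (PGPoint F 2)) ∧ K ⊆ L ∧ L.card = K.card + 1 := by
  classical
  obtain ⟨N, hNA, B, hB, hmem, -⟩ := extend (arc_reps hK) (by rwa [card_reps]) (by rwa [card_reps])
    (by rwa [card_reps]) hq2
  have hNB : N ∈ B := (hmem N).2 (Or.inl rfl)
  have hKB : ∀ P ∈ K, P.rep ∈ B := fun P hP => (hmem _).2 (Or.inr (mem_reps.2 ⟨P, hP, rfl⟩))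
  have hNK : ∀ P ∈ K, N ≠ P.rep := fun P hP h => hNA (mem_reps.2 ⟨P, hP, h.symm⟩)
  have hN0 : N ≠ 0 := by
    intro h
    obtain ⟨P, hP⟩ := Finset.card_pos.1 (by omega : 0 < K.card)
    exact hB.pair N hNB _ (hKB P hP) (hNK P hP) (by rw [h, cr_zero_left])
  have hM : (Projectivization.mk F N hN0 : PGPoint F 2).submodule = Submodule.span F {N} :=
    Projectivization.submodule_mk _ _
  set M : PGPoint F 2 := Projectivization.mk F N hN0 with hMd
  have key : ∀ Q ∈ K, ∀ R ∈ K, Q ≠ R → dt N (cr Q.rep R.rep) ≠ 0 := fun Q hQ R hR h =>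
    hB.tri _ hNB _ (hKB Q hQ) _ (hKB R hR) (hNK Q hQ) (hNK R hR) (fun h' => h (rep_inj h'))
  have hMK : M ∉ K := by
    intro h
    obtain ⟨R, hR, hRM⟩ := Finset.exists_mem_ne (by omega : 1 < K.card) M
    apply key M h R hR hRM.symm
    rw [← coll_iff hM M.submodule_eq R.submodule_eq, coll_rep, dt_cr_self]
  refine ⟨insert M K, ?_, Finset.subset_insert _ _, Finset.card_insert_of_notMem hMK⟩
  intro x hx y hy z hz hxy hxz hyz
  rw [Finset.mem_coe, Finset.mem_insert] at hx hy hz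
  rcases hx with hx | hx
  · have hy' := hy.resolve_left (fun h => hxy (hx.trans h.symm))
    have hz' := hz.resolve_left (fun h => hxz (hx.trans h.symm))
    rw [hx, coll_iff hM y.submodule_eq z.submodule_eq]
    exact key y hy' z hz' hyz
  rcases hy with hy | hy
  · have hz' := hz.resolve_left (fun h => hyz (hy.trans h.symm))
    rw [hy, coll_iff x.submodule_eq hM z.submodule_eq, dt_cr_rot]
    exact key z hz' x hx hxz.symm
  rcases hz with hz | hz
  · rw [hz, coll_iff x.submodule_eq y.submodule_eq hM, dt_cr_rot, dt_cr_rot]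
    exact key x hx y hy hxy
  exact hK x hx y hy z hz hxy hxz hyz

lemma fill [CharP F 2] [Fintype F] (hq2 : 2 < Fintype.card F) (n : ℕ) : ∀ {K : Finset (PGPoint F 2)},
    IsCap (K : Set (PGPoint F 2)) → 3 ≤ K.card → K.card + n = Fintype.card F + 2 →
    ((Fintype.card F : ℤ) + 1 - K.card) ^ 2 < Fintype.card F →
    ∃ L : Finset (PGPoint F 2), IsCap (L : Set (PGPoint F 2)) ∧ K ⊆ L ∧ L.card = Fintype.card F + 2 := by
  induction n with
  | zero => intro K hK _ h _; exact ⟨K, hK, subset_rfl, h⟩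
  | succ n ih =>
    intro K hK h3 h hq
    obtain ⟨L, hL, hKL, hLc⟩ := step hK h3 (by omega) hq hq2
    have hsq : ((Fintype.card F : ℤ) + 1 - L.card) ^ 2 < Fintype.card F := by
      have e1 : (Fintype.card F : ℤ) + 1 - L.card = n - 1 := by omega
      have e2 : (Fintype.card F : ℤ) + 1 - K.card = n := by omega
      rw [e1]; rw [e2] at hq
      rcases Nat.eq_zero_or_pos n with h0 | h0
      · subst h0; push_cast; have : (2 : ℤ) < Fintype.card F := by exact_mod_cast hq2
        linarith
      · have : (1 : ℤ) ≤ n := by exact_mod_cast h0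
        nlinarith
    obtain ⟨L', h1, h2, h4⟩ := ih hL (by omega) (by omega) hsq
    exact ⟨L', h1, hKL.trans h2, h4⟩

lemma uniq [Fintype F] {K H1 H2 : Finset (PGPoint F 2)} (h1 : IsCap (H1 : Set (PGPoint F 2)))
    (h2 : IsCap (H2 : Set (PGPoint F 2))) (hc2 : H2.card = Fintype.card F + 2)
    (hK1 : K ⊆ H1) (hK2 : K ⊆ H2) (hk : Fintype.card F + 2 < 2 * K.card) : H1 ⊆ H2 := by
  classical
  intro P hP
  by_contra hP2
  have hPK : P ∉ K := fun h => hP2 (hK2 h)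
  have hex : ∀ x : PGPoint F 2, ∃ y, x ∈ K → y ∈ H2 ∧ y ≠ x ∧ Coll3 P x y := by
    intro x
    by_cases hx : x ∈ K
    · obtain ⟨v, hv, hvx, hd⟩ := meet (arc_reps h2) (by rw [card_reps, hc2])
        (mem_reps.2 ⟨x, hK2 hx, rfl⟩) (cr_rep (P := P) (Q := x) (fun h => hPK (h ▸ hx)))
      obtain ⟨y, hy, rfl⟩ := mem_reps.1 hv
      exact ⟨y, fun _ => ⟨hy, fun h => hvx (by rw [h]), coll_rep.2 hd⟩⟩
    · exact ⟨x, fun h => absurd h hx⟩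
  choose f hf using hex
  have hmaps : Set.MapsTo f (K : Set (PGPoint F 2)) ((H2 \ K : Finset _) : Set (PGPoint F 2)) := by
    intro x hx
    obtain ⟨a, b, c⟩ := hf x hx
    rw [Finset.mem_coe, Finset.mem_sdiff]
    refine ⟨a, fun hfK => ?_⟩
    exact h1 P hP x (hK1 hx) (f x) (hK1 hfK) (fun h => hPK (h ▸ hx)) (fun h => hPK (h ▸ hfK)) b.symm c
  have hinj : Set.InjOn f (K : Set (PGPoint F 2)) := by
    intro x hx y hy hxy
    by_contra hne
    obtain ⟨a, b, c⟩ := hf x hx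
    obtain ⟨a', b', c'⟩ := hf y hy
    rw [← hxy] at a' b' c'
    have h3 := h1 P hP x (hK1 hx) y (hK1 hy) (fun h => hPK (h ▸ hx)) (fun h => hPK (h ▸ hy)) hne
    rw [coll_rep] at c c' h3
    have hz : cr P.rep (f x).rep = 0 := by
      refine nondeg h3 (by rw [dt_comm, dt_cr_self]) ?_ ?_
      · rw [dt_comm, dt_cr_rot, dt_cr_rot]
        have e := c
        rw [← dt_cr_comm, cr_anti] at e
        simp only [dt, cr0, cr1, cr2, Pi.neg_apply] at e ⊢
        linear_combination -e
      · have e := c'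
        simp only [dt, cr0, cr1, cr2] at e ⊢
        linear_combination -e
    exact cr_rep (P := P) (Q := f x) (fun h => hP2 (h ▸ a)) hz
  have := Finset.card_le_card_of_injOn f hmaps hinj
  have h5 := Finset.card_sdiff_add_card_eq_card hK2
  omega
end
end Seg
theorem stmt18 (F : Type*) [Field F] [Fintype F] (q : ℕ) (hcard : Fintype.card F = q)
    (hqeven : Even q) (hq : 2 < q)
    (K : Set (PGPoint F 2)) (hK : IsCap K)
    (hk₁ : (q : ℝ) - Real.sqrt q + 1 < (K.ncard : ℝ)) (hk₂ : K.ncard ≤ q + 1) :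
    ∃! A : Set (PGPoint F 2), IsCap A ∧ A.ncard = q + 2 ∧ K ⊆ A := by
  classical
  subst hcard
  have hchar : CharP F 2 := by
    have h := FiniteField.even_card_iff_char_two (F := F)
    have h2 : ringChar F = 2 := h.2 (Nat.even_iff.1 hqeven)
    exact ringChar.of_eq h2
  have hs := Real.sqrt_nonneg (Fintype.card F : ℝ)
  have hss := Real.sq_sqrt (Nat.cast_nonneg (α := ℝ) (Fintype.card F))
  have hkq : (K.ncard : ℝ) ≤ (Fintype.card F : ℝ) + 1 := by exact_mod_cast hk₂
  have hq4 : 4 ≤ Fintype.card F := by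
    obtain ⟨r, hr⟩ := hqeven; omega
  have hsq : ((Fintype.card F : ℤ) + 1 - K.ncard) ^ 2 < Fintype.card F := by
    have : ((Fintype.card F : ℝ) + 1 - K.ncard) ^ 2 < Fintype.card F := by nlinarith
    exact_mod_cast this
  have hk0 : Fintype.card F + 2 < 2 * K.ncard := by
    by_contra hcon
    have h4 : 2 * (K.ncard : ℤ) ≤ Fintype.card F + 2 := by exact_mod_cast not_lt.1 hcon
    have h5 : (4 : ℤ) ≤ Fintype.card F := by exact_mod_cast hq4
    nlinarith
  have hfin : K.Finite := Set.finite_of_ncard_pos (by omega)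
  obtain ⟨K, rfl⟩ := hfin.exists_finset_coe
  rw [Set.ncard_coe_finset] at *
  obtain ⟨L, hL, hKL, hLc⟩ := Seg.fill hq (Fintype.card F + 2 - K.card) hK (by omega) (by omega) hsq
  refine ⟨L, ⟨hL, by rw [Set.ncard_coe_finset, hLc], by exact_mod_cast hKL⟩, ?_⟩
  rintro A ⟨hA, hAc, hKA⟩
  have hAf : A.Finite := Set.finite_of_ncard_pos (by omega)
  obtain ⟨A, rfl⟩ := hAf.exists_finset_coe
  rw [Set.ncard_coe_finset] at hAc
  have hKA' : K ⊆ A := by exact_mod_cast hKA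
  rw [Finset.coe_inj]
  exact Finset.eq_of_subset_of_card_le (Seg.uniq hA hL hLc hKA' hKL hk0) (by omega)
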